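/- arXiv:1301.6645 — 3 statements merged into one kernel-verified Lean document; each statement's English description precedes it below -/
import Mathlib

section
/- The automorphism φ of F₃ determined by a ↦ w_a, b ↦ w_b, c ↦ w_c is fully irreducible: for every integer n ≥ 1, every subgroup A of F₃ that is a proper nontrivial free factor (A ≠ ⊥ and A ≠ F₃), and every element u ∈ F₃, the image subgroup of A under φⁿ is not equal to the conjugate subgroup u·A·u⁻¹. (This is the group-theoretically expressible content of the Main Theorem in rank 3: the constructed outer automorphism is fully irreducible.) -/
noncomputable section

/-- The free group of rank 3. -/
abbrev F3 := FreeGroup (Fin 3)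

/-- The generator `a`. -/
def a : F3 := FreeGroup.of 0
/-- The generator `b`. -/
def b : F3 := FreeGroup.of 1
/-- The generator `c`. -/
def c : F3 := FreeGroup.of 2

/-- The word `w_a`. -/
def wa : F3 :=
  a*b*a*b⁻¹*a*a*c*b⁻¹*a*b*a*b⁻¹*a*a*c*b*a*b*a*b⁻¹*a*a*c*a*b*a*b⁻¹*a*a*c*b⁻¹*a

/-- The word `w_b`. -/
def wb : F3 :=
  b*a*b*a*b⁻¹*a*a*c*a⁻¹*b*c⁻¹*a⁻¹*a⁻¹*b*a⁻¹*b⁻¹*a⁻¹*c⁻¹*a⁻¹*a⁻¹*b*a⁻¹*b⁻¹*a⁻¹*b⁻¹*c⁻¹*a⁻¹*a⁻¹*b*a⁻¹*b⁻¹*a⁻¹*b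

/-- The word `w_c`. -/
def wc : F3 := a*b*a*b⁻¹*a*a*c

/-- `A` is a free factor of `G` if there is a subgroup `B` such that the canonical
homomorphism `A ∗ B →* G` induced by the inclusions is bijective. -/
def IsFreeFactor {G : Type*} [Group G] (A : Subgroup G) : Prop :=
  ∃ B : Subgroup G, Function.Bijective (Monoid.Coprod.lift A.subtype B.subtype)

open Polynomial

namespace FIR

def pz : ℤ[X] := X^3 - 20 * X^2 + 28 * X - 1
def pq : ℚ[X] := X^3 - 20 * X^2 + 28 * X - 1

lemma pz_natDegree : pz.natDegree = 3 := by unfold pz; compute_degree!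
lemma pq_natDegree : pq.natDegree = 3 := by unfold pq; compute_degree!
lemma pz_monic : pz.Monic := by unfold pz; monicity!
lemma pq_monic : pq.Monic := by unfold pq; monicity!

lemma pz_irr : Irreducible pz := by
  rw [pz_monic.irreducible_iff_roots_eq_zero_of_degree_le_three
    (by rw [pz_natDegree]; norm_num) (by rw [pz_natDegree])]
  rw [Multiset.eq_zero_iff_forall_notMem]
  intro r hr
  have h := (mem_roots'.1 hr).2
  simp only [pz, IsRoot.def, eval_sub, eval_add, eval_pow, eval_mul, eval_X, eval_ofNat,
    eval_one] at h
  have hu : IsUnit r := IsUnit.of_mul_eq_one (r^2 - 20 * r + 28) (by linarith)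
  rcases Int.isUnit_iff.1 hu with rfl | rfl <;> norm_num at h

lemma pq_irr : Irreducible pq := by
  have h := (pz_monic.irreducible_iff_irreducible_map_fraction_map (K := ℚ)).1 pz_irr
  have e : pz.map (algebraMap ℤ ℚ) = pq := by simp [pz, pq]
  rwa [e] at h

def M : Matrix (Fin 3) (Fin 3) ℚ := !![17, -9, 4; -1, 2, 0; 4, -2, 1]

def T : Module.End ℚ (Fin 3 → ℚ) := Matrix.toLin' M

lemma T_apply (v : Fin 3 → ℚ) :
    T v = ![17 * v 0 - 9 * v 1 + 4 * v 2, - v 0 + 2 * v 1, 4 * v 0 - 2 * v 1 + v 2] := by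
  ext i
  fin_cases i <;> simp [T, M, Matrix.mulVec, dotProduct, Fin.sum_univ_three] <;> ring

lemma T_root : aeval T pq = 0 := by
  apply LinearMap.ext
  intro v
  have h3 : aeval T pq v = T (T (T v)) - 20 * T (T v) + 28 * T v - v := by
    simp only [pq, pow_succ, pow_zero, one_mul, map_sub, map_add, map_mul, map_one, aeval_X,
      map_ofNat, LinearMap.sub_apply, LinearMap.add_apply, Module.End.mul_apply,
      Module.End.one_apply, Module.End.ofNat_apply]
    ext i
    simp
  rw [h3]
  ext i
  simp only [T_apply, Pi.sub_apply, Pi.add_apply, Pi.mul_apply, Pi.ofNat_apply, Pi.zero_apply]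
  fin_cases i <;> simp <;> ring

/-- The forward orbit of the first basis vector stays in an open cone. -/
lemma cone (n : ℕ) : 0 < (T^n) ![1,0,0] 0 ∧ (T^n) ![1,0,0] 1 ≤ 0 ∧ 0 ≤ (T^n) ![1,0,0] 2 := by
  induction n with
  | zero => simp
  | succ n ih =>
    obtain ⟨h0, h1, h2⟩ := ih
    rw [pow_succ', Module.End.mul_apply, T_apply]
    simp
    refine ⟨?_, ?_, ?_⟩ <;> linarith

lemma not_scalar (n : ℕ) (hn : 1 ≤ n) (r : ℚ) : T^n ≠ algebraMap ℚ _ r := by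
  intro h
  obtain ⟨m, rfl⟩ : ∃ m, n = m + 1 := ⟨n - 1, by omega⟩
  have h1 : (T^(m+1)) ![1,0,0] 1 = 0 := by rw [h]; simp [Module.algebraMap_end_apply]
  rw [pow_succ', Module.End.mul_apply, T_apply] at h1
  obtain ⟨h0, h2, -⟩ := cone m
  simp at h1
  linarith

lemma exists_irr (n : ℕ) (hn : 1 ≤ n) :
    ∃ q : ℚ[X], Irreducible q ∧ q.natDegree = 3 ∧ aeval (T^n) q = 0 := by
  have : Fact (Irreducible pq) := ⟨pq_irr⟩
  have key : ∀ f : ℚ[X], aeval (AdjoinRoot.root pq) f = 0 → aeval T f = 0 := by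
    intro f hf
    have e : aeval (AdjoinRoot.root pq) f = AdjoinRoot.mk pq f := by
      have : (aeval (R := ℚ) (AdjoinRoot.root pq)).toRingHom = AdjoinRoot.mk pq := by
        ext <;> simp
      exact DFunLike.congr_fun this f
    rw [e, AdjoinRoot.mk_eq_zero] at hf
    obtain ⟨g, rfl⟩ := hf
    simp [T_root]
  have : FiniteDimensional ℚ (AdjoinRoot pq) :=
    (AdjoinRoot.powerBasis pq_irr.ne_zero).finite
  have hfr : Module.finrank ℚ (AdjoinRoot pq) = 3 := by
    rw [(AdjoinRoot.powerBasis pq_irr.ne_zero).finrank, AdjoinRoot.powerBasis_dim, pq_natDegree]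
  set ν := (AdjoinRoot.root pq)^n with hν
  have hint : IsIntegral ℚ ν := IsIntegral.of_finite ℚ ν
  refine ⟨minpoly ℚ ν, minpoly.irreducible hint, ?_, ?_⟩
  · have hd : (minpoly ℚ ν).natDegree ∣ 3 := hfr ▸ minpoly.degree_dvd hint
    rcases (Nat.dvd_prime Nat.prime_three).1 hd with h | h
    · exfalso
      obtain ⟨r, hr⟩ := minpoly.natDegree_eq_one_iff.1 h
      have := key (X^n - C r) (by simp [hr, hν])
      refine not_scalar n hn r ?_
      simpa [sub_eq_zero] using this
    · exact h
  · have := key ((minpoly ℚ ν).comp (X^n)) (by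
      rw [aeval_comp, map_pow, aeval_X]; exact minpoly.aeval ℚ ν)
    simpa [aeval_comp] using this

lemma invariant (n : ℕ) (hn : 1 ≤ n) (V : Submodule ℚ (Fin 3 → ℚ))
    (hV : ∀ v ∈ V, (T^n) v ∈ V) (h0 : V ≠ ⊥) : V = ⊤ := by
  obtain ⟨q, hq, hd, hz⟩ := exists_irr n hn
  have : Nontrivial V := (Submodule.nontrivial_iff_ne_bot).2 h0
  let R : Module.End ℚ V := (T^n).restrict hV
  have hR : aeval R q = 0 := by
    have hc : ∀ f : ℚ[X], ∀ v : V, ((aeval R f v : V) : Fin 3 → ℚ) = aeval (T^n) f v := by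
      intro f
      induction f using Polynomial.induction_on' with
      | add f g hf hg => intro v; simp [hf, hg]
      | monomial k r =>
        intro v
        have hp : ((R^k) v : Fin 3 → ℚ) = ((T^n)^k) v := by
          induction k with
          | zero => simp
          | succ k ih => rw [pow_succ', pow_succ', Module.End.mul_apply, Module.End.mul_apply, ← ih]; rfl
        simp [aeval_monomial, hp, Module.algebraMap_end_apply]
    ext1 v
    apply Subtype.ext
    rw [hc, hz]; rfl
  have hdvd := minpoly.dvd ℚ R hR
  have hass : Associated (minpoly ℚ R) q :=
    (hq.dvd_iff.1 hdvd).resolve_left (minpoly.not_isUnit ℚ R) |>.symm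
  have h3 : (minpoly ℚ R).natDegree = 3 := by
    rw [natDegree_eq_of_degree_eq (degree_eq_degree_of_associated hass), hd]
  have hle : (minpoly ℚ R).natDegree ≤ Module.finrank ℚ V := by
    rw [← LinearMap.charpoly_natDegree R]
    exact natDegree_le_of_dvd (LinearMap.minpoly_dvd_charpoly R) (LinearMap.charpoly_monic R).ne_zero
  apply Submodule.eq_top_of_finrank_eq
  have := Submodule.finrank_le V
  simp at this ⊢
  omega

/-- Abelianization. -/
def ab : F3 →* Multiplicative (Fin 3 → ℚ) :=
  FreeGroup.lift fun i => Multiplicative.ofAdd (Pi.single i 1)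

lemma exists_hom {G : Type*} [Group G] [IsFreeGroup G] [Nontrivial G] :
    ∃ f : G →* Multiplicative ℚ, f ≠ 1 := by
  refine ⟨IsFreeGroup.lift fun _ => Multiplicative.ofAdd 1, fun h => ?_⟩
  have hemp : IsEmpty (IsFreeGroup.Generators G) := by
    refine ⟨fun i => ?_⟩
    have := IsFreeGroup.lift_of (fun _ : IsFreeGroup.Generators G => Multiplicative.ofAdd (1 : ℚ)) i
    rw [h] at this
    have h2 := congrArg Multiplicative.toAdd this
    simp at h2
  have := (IsFreeGroup.toFreeGroup G).toEquiv.subsingleton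
  exact not_subsingleton G this

lemma hom_factor (h : F3 →* Multiplicative ℚ) :
    ∃ L : (Fin 3 → ℚ) →ₗ[ℚ] ℚ, ∀ x, (h x).toAdd = L (ab x).toAdd := by
  let L : (Fin 3 → ℚ) →ₗ[ℚ] ℚ := Fintype.linearCombination ℚ fun i => (h (FreeGroup.of i)).toAdd
  refine ⟨L, fun x => ?_⟩
  have : h = (AddMonoidHom.toMultiplicative L.toAddMonoidHom).comp ab := by
    apply FreeGroup.ext_hom
    intro i
    apply Multiplicative.toAdd.injective
    simp [ab, L, Fintype.linearCombination_apply_single]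
  conv_lhs => rw [this]
  rfl

def V (A : Subgroup F3) : Submodule ℚ (Fin 3 → ℚ) :=
  Submodule.span ℚ (Set.image (fun x => (ab x).toAdd) (A : Set F3))

lemma V_mem {A : Subgroup F3} {x : F3} (hx : x ∈ A) : (ab x).toAdd ∈ V A :=
  Submodule.subset_span ⟨x, hx, rfl⟩

/-- Homomorphisms defined on the two factors of a free product decomposition glue. -/
lemma glue {A B : Subgroup F3} (hAB : Function.Bijective (Monoid.Coprod.lift A.subtype B.subtype))
    (f : A →* Multiplicative ℚ) (g : B →* Multiplicative ℚ) :
    ∃ h : F3 →* Multiplicative ℚ, (∀ x : A, h x = f x) ∧ ∀ x : B, h x = g x := by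
  let e := MulEquiv.ofBijective _ hAB
  refine ⟨(Monoid.Coprod.lift f g).comp e.symm.toMonoidHom, fun x => ?_, fun x => ?_⟩
  · have : e.symm (x : F3) = Monoid.Coprod.inl x := by
      rw [MulEquiv.symm_apply_eq]; simp [e]
    simp [this]
  · have : e.symm (x : F3) = Monoid.Coprod.inr x := by
      rw [MulEquiv.symm_apply_eq]; simp [e]
    simp [this]

lemma V_ne_bot {A : Subgroup F3} (hA : IsFreeFactor A) (h0 : A ≠ ⊥) : V A ≠ ⊥ := by
  obtain ⟨B, hB⟩ := hA
  have : Nontrivial A := (Subgroup.nontrivial_iff_ne_bot A).2 h0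
  obtain ⟨f, hf⟩ := exists_hom (G := A)
  obtain ⟨h, h1, -⟩ := glue hB f 1
  obtain ⟨L, hL⟩ := hom_factor h
  intro hV
  apply hf
  ext1 x
  have hx := V_mem x.2
  rw [hV, Submodule.mem_bot] at hx
  rw [← h1]
  apply Multiplicative.toAdd.injective
  rw [hL, hx]; simp

lemma V_ne_top {A : Subgroup F3} (hA : IsFreeFactor A) (h0 : A ≠ ⊤) : V A ≠ ⊤ := by
  obtain ⟨B, hB⟩ := hA
  have hBb : B ≠ ⊥ := by
    rintro rfl
    apply h0
    have hr := MonoidHom.range_eq_top.2 hB.2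
    rw [Monoid.Coprod.range_lift] at hr
    simpa using hr
  have : Nontrivial B := (Subgroup.nontrivial_iff_ne_bot B).2 hBb
  obtain ⟨f, hf⟩ := exists_hom (G := B)
  obtain ⟨h, h1, h2⟩ := glue hB 1 f
  obtain ⟨L, hL⟩ := hom_factor h
  intro hV
  have hle : V A ≤ LinearMap.ker L := by
    refine Submodule.span_le.2 ?_
    rintro _ ⟨x, hx, rfl⟩
    have := h1 ⟨x, hx⟩
    simp only [SetLike.mem_coe, LinearMap.mem_ker]
    rw [← hL, this]; rfl
  rw [hV, top_le_iff, LinearMap.ker_eq_top] at hle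
  apply hf
  ext1 x
  rw [← h2]
  apply Multiplicative.toAdd.injective
  rw [hL, hle]; rfl

lemma ab_phi (φ : MulAut F3) (ha : φ a = wa) (hb : φ b = wb) (hc : φ c = wc) (x : F3) :
    (ab (φ x)).toAdd = T (ab x).toAdd := by
  have : ab.comp φ.toMonoidHom = (AddMonoidHom.toMultiplicative T.toAddMonoidHom).comp ab := by
    have aa : (ab a).toAdd = ![1,0,0] := by ext i; fin_cases i <;> simp [ab, a]
    have bb : (ab b).toAdd = ![0,1,0] := by ext i; fin_cases i <;> simp [ab, b]
    have cc : (ab c).toAdd = ![0,0,1] := by ext i; fin_cases i <;> simp [ab, c]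
    have ta : (ab (φ a)).toAdd = T (ab a).toAdd := by
      rw [ha, wa, T_apply]
      simp only [map_mul, map_inv, toAdd_mul, toAdd_inv, aa, bb, cc]
      ext i; fin_cases i <;> simp <;> norm_num
    have tb : (ab (φ b)).toAdd = T (ab b).toAdd := by
      rw [hb, wb, T_apply]
      simp only [map_mul, map_inv, toAdd_mul, toAdd_inv, aa, bb, cc]
      ext i; fin_cases i <;> simp <;> norm_num
    have tc : (ab (φ c)).toAdd = T (ab c).toAdd := by
      rw [hc, wc, T_apply]
      simp only [map_mul, map_inv, toAdd_mul, toAdd_inv, aa, bb, cc]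
      ext i; fin_cases i <;> simp <;> norm_num
    apply FreeGroup.ext_hom
    intro i
    apply Multiplicative.toAdd.injective
    fin_cases i
    · exact ta
    · exact tb
    · exact tc
  exact congrArg Multiplicative.toAdd (DFunLike.congr_fun this x)

lemma ab_phi_pow (φ : MulAut F3) (ha : φ a = wa) (hb : φ b = wb) (hc : φ c = wc) (n : ℕ)
    (x : F3) : (ab ((φ ^ n) x)).toAdd = (T ^ n) (ab x).toAdd := by
  induction n with
  | zero => simp
  | succ n ih =>
    rw [pow_succ', pow_succ', MulAut.mul_apply, Module.End.mul_apply, ab_phi φ ha hb hc, ih]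

end FIR

/-- The automorphism `φ` of `F₃` with `a ↦ w_a`, `b ↦ w_b`, `c ↦ w_c` is fully
irreducible: no positive power maps a proper nontrivial free factor onto a conjugate
of itself. -/
theorem fully_irreducible_rank3 (φ : MulAut F3)
    (ha : φ a = wa) (hb : φ b = wb) (hc : φ c = wc) :
    ∀ n : ℕ, 1 ≤ n → ∀ A : Subgroup F3, IsFreeFactor A → A ≠ ⊥ → A ≠ ⊤ →
      ∀ u : F3,
        Subgroup.map (φ ^ n : MulAut F3).toMonoidHom A ≠
          Subgroup.map (MulAut.conj u).toMonoidHom A := by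
  intro n hn A hA h0 h1 u h
  refine FIR.V_ne_top hA h1 (FIR.invariant n hn _ ?_ (FIR.V_ne_bot hA h0))
  suffices hle : FIR.V A ≤ (FIR.V A).comap (FIR.T ^ n) from fun v hv => hle hv
  refine Submodule.span_le.2 ?_
  rintro _ ⟨x, hx, rfl⟩
  have hm : (φ ^ n) x ∈ Subgroup.map (MulAut.conj u).toMonoidHom A := by
    rw [← h]; exact ⟨x, hx, rfl⟩
  obtain ⟨y, hy, hxy⟩ := hm
  have hxy' : u * y * u⁻¹ = (φ ^ n) x := hxy
  have := FIR.V_mem hy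
  have e : (FIR.ab y).toAdd = (FIR.ab ((φ ^ n) x)).toAdd := by
    rw [← hxy']; simp
  rw [e, FIR.ab_phi_pow φ ha hb hc] at this
  exact this
end
end

section
/- For every integer r ≥ 3 there exists a group automorphism φ of the free group F_r of rank r such that for every integer n ≥ 1: (i) for every subgroup A of F_r that is a proper nontrivial free factor (A ≠ ⊥ and A ≠ F_r) and every u ∈ F_r, the image of A under φⁿ is not equal to u·A·u⁻¹ (φ is fully irreducible); and (ii) for every nontrivial element w ∈ F_r, φⁿ(w) is not conjugate to w (φ is atoroidal). (This is the group-theoretically expressible content of the Main Theorem: in each rank r ≥ 3 there exists an ageometric fully irreducible outer automorphism; ageometric fully irreducibles are nongeometric, hence atoroidal.) -/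
noncomputable section

/-! ### Linear algebra of the `r`-bonacci matrix -/

/-- The `r`-bonacci matrix (with `r = m + 1`), as a linear map. -/
def tM (R : Type) [CommRing R] (m : ℕ) : (Fin (m + 1) → R) →ₗ[R] (Fin (m + 1) → R) where
  toFun v := fun i => Fin.cases (∑ j, v j) (fun k : Fin m => v k.castSucc) i
  map_add' v w := by
    funext i
    refine Fin.cases ?_ (fun k => ?_) i
    · simp [Finset.sum_add_distrib]
    · simp
  map_smul' c v := by
    funext i
    refine Fin.cases ?_ (fun k => ?_) i
    · simp [Finset.mul_sum]
    · simp

@[simp] theorem tM_zero {R : Type} [CommRing R] {m : ℕ} (v : Fin (m + 1) → R) :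
    tM R m v 0 = ∑ j, v j := rfl

@[simp] theorem tM_succ {R : Type} [CommRing R] {m : ℕ} (v : Fin (m + 1) → R) (k : Fin m) :
    tM R m v k.succ = v k.castSucc := rfl

theorem tM_inj {R : Type} [CommRing R] {m : ℕ} : Function.Injective (tM R m) := by
  rw [injective_iff_map_eq_zero]
  intro v hv
  have h1 : ∀ k : Fin m, v k.castSucc = 0 := fun k => by
    rw [← tM_succ v k, hv]; rfl
  have h0 : ∑ j, v j = 0 := by rw [← tM_zero v, hv]; rfl
  rw [Fin.sum_univ_castSucc] at h0
  simp only [h1, Finset.sum_const_zero, zero_add] at h0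
  funext i
  refine Fin.lastCases ?_ (fun k => ?_) i
  · exact h0
  · exact h1 k

theorem tM_cast {m : ℕ} (v : Fin (m + 1) → ℤ) (k : ℕ) (i : Fin (m + 1)) :
    (((tM ℤ m)^[k] v i : ℤ) : ℝ) = (tM ℝ m)^[k] (fun i => (v i : ℝ)) i := by
  induction k generalizing i with
  | zero => rfl
  | succ k ih =>
    rw [Function.iterate_succ_apply', Function.iterate_succ_apply']
    refine Fin.cases ?_ (fun k => ?_) i
    · simp [ih]
    · simp [ih]

theorem tM_iter_smul {m : ℕ} (c : ℝ) (v : Fin (m + 1) → ℝ) (k : ℕ) :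
    (tM ℝ m)^[k] (c • v) = c • (tM ℝ m)^[k] v := by
  induction k generalizing v with
  | zero => rfl
  | succ k ih => rw [Function.iterate_succ_apply, map_smul, ih, Function.iterate_succ_apply]

theorem tM_hist {R : Type} [CommRing R] {m : ℕ} (v : Fin (m + 1) → R) (k j : ℕ) (hj : j < m + 1) :
    (tM R m)^[k + j] v ⟨j, hj⟩ = (tM R m)^[k] v 0 := by
  induction j with
  | zero => rfl
  | succ j ih =>
    rw [← add_assoc, Function.iterate_succ_apply']
    have := tM_succ ((tM R m)^[k + j] v) ⟨j, by omega⟩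
    rw [← ih (by omega)]
    exact this

theorem tM_sum {R : Type} [CommRing R] {m : ℕ} (v : Fin (m + 1) → R) :
    ∑ i, tM R m v i = 2 * ∑ i, v i - v (Fin.last m) := by
  rw [Fin.sum_univ_succ]
  simp only [tM_zero, tM_succ]
  rw [Fin.sum_univ_castSucc]; ring

theorem tM_periodic {m : ℕ} (hm : 1 ≤ m) (v : Fin (m + 1) → ℤ) (N : ℕ) (hN : 1 ≤ N)
    (h : (tM ℤ m)^[N] v = v) : v = 0 := by
  set x : ℕ → ℤ := fun k => (tM ℤ m)^[k] v 0 with hx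
  have hper : ∀ k, x (k + N) = x k := fun k => by
    simp only [hx]; rw [Function.iterate_add_apply, h]
  have hperm : ∀ j k, x (k + N * j) = x k := fun j => by
    induction j with
    | zero => intro k; rfl
    | succ j ih => intro k; rw [mul_add, mul_one, ← add_assoc, hper, ih]
  have hs : ∀ k, x (k + 1) = ∑ i, (tM ℤ m)^[k] v i := fun k => by
    simp only [hx]; rw [Function.iterate_succ_apply', tM_zero]
  have hrec : ∀ k, x (k + m + 2) = 2 * x (k + m + 1) - x k := fun k => by
    rw [hs (k + m + 1), hs (k + m), Function.iterate_succ_apply', tM_sum]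
    congr 1
    exact tM_hist v k m (by omega)
  obtain ⟨k0, hk0, hmax⟩ := Finset.exists_max_image (Finset.range N) x ⟨0, by simp; omega⟩
  have hle : ∀ k, x k ≤ x k0 := fun k => by
    have h1 := hperm (k / N) (k % N)
    rw [Nat.mod_add_div] at h1
    rw [h1]
    exact hmax _ (by simp; exact Nat.mod_lt _ (by omega))
  set K := k0 + N * (m + 2) with hK
  have hKm : m + 2 ≤ K := by
    have : 1 * (m + 2) ≤ N * (m + 2) := Nat.mul_le_mul_right _ hN
    omega
  have hconst : ∀ j, x (K + j) = x k0 := fun j => by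
    induction j with
    | zero => simpa [hK] using hperm (m + 2) k0
    | succ j ih =>
      obtain ⟨q, hq⟩ : ∃ q, K + j = q + m + 1 := ⟨K + j - m - 1, by omega⟩
      have h1 := hrec q
      have h2 : K + (j + 1) = q + m + 2 := by omega
      rw [hq] at ih
      rw [h2]
      have := hle (q + m + 2)
      have := hle q
      omega
  have hall : ∀ i, (tM ℤ m)^[K + m] v i = x k0 := fun i => by
    have h1 := tM_hist v (K + (m - i)) i i.2
    have h2 : K + (m - i) + (i : ℕ) = K + m := by omega
    rw [h2] at h1
    rw [← hconst (m - i)]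
    exact h1
  have hC : x k0 = 0 := by
    have h1 := hs (K + m)
    rw [add_assoc, hconst] at h1
    simp only [hall] at h1
    simp at h1
    have hm' : (1 : ℤ) ≤ m := by exact_mod_cast hm
    by_contra hne
    have : (m : ℤ) * x k0 = 0 := by linarith
    rcases mul_eq_zero.1 this with h | h
    · omega
    · exact hne h
  have hz : (tM ℤ m)^[K + m] v = (tM ℤ m)^[K + m] 0 := by
    funext i
    rw [hall, hC, iterate_map_zero]; rfl
  exact tM_inj.iterate _ hz

theorem tM_bounded {m : ℕ} (hm : 1 ≤ m) (v : Fin (m + 1) → ℤ) (N : ℕ) (hN : 1 ≤ N)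
    (C : ℤ) (h : ∀ k i, |(tM ℤ m)^[N * k] v i| ≤ C) : v = 0 := by
  have hfin : (Set.Icc (fun _ => -C) (fun _ => C) : Set (Fin (m + 1) → ℤ)).Finite :=
    Set.finite_Icc _ _
  obtain ⟨a, b, hab, he⟩ := hfin.exists_lt_map_eq_of_forall_mem
    (f := fun k : ℕ => (tM ℤ m)^[N * k] v)
    (fun k => Set.mem_Icc.2 ⟨fun i => (abs_le.1 (h k i)).1, fun i => (abs_le.1 (h k i)).2⟩)
  obtain ⟨c, rfl⟩ := Nat.exists_eq_add_of_lt hab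
  have h1 : N * (a + c + 1) = N * a + N * (c + 1) := by ring
  rw [h1, Function.iterate_add_apply] at he
  exact tM_periodic hm v (N * (c + 1)) (Nat.mul_pos hN (by omega)) (tM_inj.iterate _ he).symm

theorem exists_mu (m : ℕ) (hm : 1 ≤ m) :
    ∃ μ : ℝ, 0 < μ ∧ μ < 1 ∧ ∑ i : Fin (m + 1), μ ^ ((i : ℕ) + 1) = 1 := by
  have hc : ContinuousOn (fun x : ℝ => ∑ i : Fin (m + 1), x ^ ((i : ℕ) + 1)) (Set.Icc 0 1) := by
    fun_prop
  have hmem : (1 : ℝ) ∈ Set.Ioo ((fun x : ℝ => ∑ i : Fin (m + 1), x ^ ((i : ℕ) + 1)) 0)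
      ((fun x : ℝ => ∑ i : Fin (m + 1), x ^ ((i : ℕ) + 1)) 1) := by
    constructor
    · simp
    · simp; omega
  obtain ⟨μ, hμ, he⟩ := intermediate_value_Ioo (by norm_num) hc hmem
  exact ⟨μ, hμ.1, hμ.2, he⟩

/-- The left eigenvector of the matrix. -/
def ell (m : ℕ) (μ : ℝ) (v : Fin (m + 1) → ℝ) : ℝ := ∑ i, (1 - μ ^ ((Fin.rev i : ℕ) + 1)) * v i

section mu
variable {m : ℕ} {μ : ℝ}

theorem sum_rev_mu (hs : ∑ i : Fin (m + 1), μ ^ ((i : ℕ) + 1) = 1) :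
    ∑ i : Fin (m + 1), μ ^ ((Fin.rev i : ℕ) + 1) = 1 := by
  rw [← hs]
  exact Equiv.sum_comp Fin.revPerm (fun i : Fin (m + 1) => μ ^ ((i : ℕ) + 1))

theorem mu_eq (hs : ∑ i : Fin (m + 1), μ ^ ((i : ℕ) + 1) = 1) : 2 * μ - μ ^ (m + 2) = 1 := by
  have e1 : μ * ∑ i : Fin (m + 1), μ ^ ((i : ℕ) + 1) = μ := by rw [hs, mul_one]
  rw [Fin.sum_univ_castSucc, mul_add, Finset.mul_sum] at e1
  rw [Fin.sum_univ_succ] at hs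
  simp only [Fin.val_succ, Fin.val_castSucc, Fin.val_last, Fin.val_zero] at e1 hs
  have e2 : ∑ i : Fin m, μ * μ ^ ((i : ℕ) + 1) = ∑ i : Fin m, μ ^ ((i : ℕ) + 1 + 1) :=
    Finset.sum_congr rfl (fun i _ => by ring)
  rw [e2] at e1
  have : μ ^ (m + 2) = μ * μ ^ (m + 1) := by ring
  rw [this]
  simp only [zero_add, pow_one] at hs
  linarith

theorem ell_tM (hs : ∑ i : Fin (m + 1), μ ^ ((i : ℕ) + 1) = 1) (v : Fin (m + 1) → ℝ) :
    μ * ell m μ (tM ℝ m v) = ell m μ v := by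
  have hμ := mu_eq hs
  unfold ell
  rw [Fin.sum_univ_succ, Fin.sum_univ_castSucc (n := m)]
  simp only [tM_zero, tM_succ]
  rw [Fin.sum_univ_castSucc (n := m) (f := v)]
  simp only [Fin.rev_succ, Fin.rev_castSucc, Fin.val_succ, Fin.val_castSucc, Fin.rev_zero,
    Fin.val_last, Fin.rev_last, Fin.val_zero]
  have e : ∑ k : Fin m, (1 - μ ^ ((Fin.rev k : ℕ) + 1 + 1)) * v k.castSucc =
      μ * ∑ k : Fin m, (1 - μ ^ ((Fin.rev k : ℕ) + 1)) * v k.castSucc +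
      (1 - μ) * ∑ k : Fin m, v k.castSucc := by
    rw [Finset.mul_sum, Finset.mul_sum, ← Finset.sum_add_distrib]
    exact Finset.sum_congr rfl (fun i _ => by ring)
  rw [e]
  have h2 : μ * (1 - μ ^ (m + 1)) = 1 - μ := by
    have : μ ^ (m + 2) = μ * μ ^ (m + 1) := by ring
    rw [this] at hμ; linarith
  rw [mul_add, ← mul_assoc, h2]
  ring

theorem ell_zero_bound (h0 : 0 < μ)
    (hs : ∑ i : Fin (m + 1), μ ^ ((i : ℕ) + 1) = 1) (v : Fin (m + 1) → ℝ)
    (hv : ell m μ v = 0) (C : ℝ) (hC : ∀ i, |v i| ≤ C) (k : ℕ) :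
    ∀ i, |(tM ℝ m)^[k] v i| ≤ C := by
  induction k generalizing v with
  | zero => exact hC
  | succ k ih =>
    rw [Function.iterate_succ_apply]
    apply ih
    · have := ell_tM hs v
      rw [hv] at this
      exact (mul_eq_zero.1 this).resolve_left h0.ne'
    · intro i
      refine Fin.cases ?_ (fun k => ?_) i
      · rw [tM_zero]
        have e : ∑ j, v j = ∑ j, μ ^ ((Fin.rev j : ℕ) + 1) * v j := by
          unfold ell at hv
          rw [← sub_eq_zero, ← Finset.sum_sub_distrib, ← hv]
          exact Finset.sum_congr rfl (fun i _ => by ring)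
        rw [e]
        calc _ ≤ ∑ j, |μ ^ ((Fin.rev j : ℕ) + 1) * v j| := Finset.abs_sum_le_sum_abs _ _
          _ ≤ ∑ j, μ ^ ((Fin.rev j : ℕ) + 1) * C := by
            apply Finset.sum_le_sum
            intro j _
            rw [abs_mul, abs_of_pos (pow_pos h0 _)]
            exact mul_le_mul_of_nonneg_left (hC j) (pow_pos h0 _).le
          _ = C := by rw [← Finset.sum_mul, sum_rev_mu hs, one_mul]
      · rw [tM_succ]; exact hC _

theorem ell_zero_int (hm : 1 ≤ m) (h0 : 0 < μ)
    (hs : ∑ i : Fin (m + 1), μ ^ ((i : ℕ) + 1) = 1) (v : Fin (m + 1) → ℤ)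
    (hv : ell m μ (fun i => (v i : ℝ)) = 0) : v = 0 := by
  refine tM_bounded hm v 1 le_rfl (∑ i, |v i|) ?_
  intro k i
  have hb := ell_zero_bound h0 hs _ hv ((∑ i, |v i| : ℤ) : ℝ) (fun j => by
    have : |v j| ≤ ∑ i, |v i| :=
      Finset.single_le_sum (f := fun i => |v i|) (fun i _ => abs_nonneg _) (Finset.mem_univ j)
    exact_mod_cast this) (1 * k) i
  rw [← tM_cast] at hb
  exact_mod_cast hb

/-- Dual form of `ell_zero_int`. -/
theorem dual_zero_int (hm : 1 ≤ m) (h0 : 0 < μ)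
    (hs : ∑ i : Fin (m + 1), μ ^ ((i : ℕ) + 1) = 1) (g : Fin (m + 1) → ℤ)
    (hg : ∑ i, (g i : ℝ) * μ ^ ((i : ℕ) + 1) = 0) : g = 0 := by
  set T : ℤ := ∑ i, g i with hT
  have hr := sum_rev_mu hs
  have hg' : ∑ i : Fin (m + 1), (g (Fin.rev i) : ℝ) * μ ^ ((Fin.rev i : ℕ) + 1) = 0 := by
    rw [← hg]
    exact Equiv.sum_comp Fin.revPerm (fun i : Fin (m + 1) => (g i : ℝ) * μ ^ ((i : ℕ) + 1))
  have hTr : ∑ i, g (Fin.rev i) = T := Equiv.sum_comp Fin.revPerm g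
  have hv := ell_zero_int hm h0 hs (fun i => T - m * g (Fin.rev i)) (by
    unfold ell
    push_cast
    have hTr' : ∑ i, (g (Fin.rev i) : ℝ) = T := by exact_mod_cast hTr
    have : ∀ i : Fin (m + 1), (1 - μ ^ ((Fin.rev i : ℕ) + 1)) * ((T : ℝ) - m * g (Fin.rev i)) =
        T - m * g (Fin.rev i) - T * μ ^ ((Fin.rev i : ℕ) + 1)
          + m * (g (Fin.rev i) * μ ^ ((Fin.rev i : ℕ) + 1)) := fun i => by ring
    simp only [this]
    rw [Finset.sum_add_distrib, Finset.sum_sub_distrib, Finset.sum_sub_distrib,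
      ← Finset.mul_sum, ← Finset.mul_sum, ← Finset.mul_sum, hg', hr, hTr']
    simp
    ring)
  have hc : ∀ i, (m : ℤ) * g i = T := fun i => by
    have := congrFun hv (Fin.rev i)
    simp only [Fin.rev_rev, Pi.zero_apply] at this
    linarith
  have hm' : (m : ℝ) ≠ 0 := by exact_mod_cast (by omega : m ≠ 0)
  have hT0 : (T : ℝ) = 0 := by
    have : (m : ℝ) * ∑ i, (g i : ℝ) * μ ^ ((i : ℕ) + 1) = T := by
      rw [Finset.mul_sum]
      have : ∀ i : Fin (m + 1), (m : ℝ) * ((g i : ℝ) * μ ^ ((i : ℕ) + 1)) =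
          T * μ ^ ((i : ℕ) + 1) := fun i => by
        rw [← mul_assoc]; congr 1; exact_mod_cast hc i
      simp only [this]
      rw [← Finset.mul_sum, hs, mul_one]
    rw [← this, hg, mul_zero]
  funext i
  have h3 := hc i
  have hT0' : T = 0 := by exact_mod_cast hT0
  rw [hT0'] at h3
  rcases mul_eq_zero.1 h3 with h | h
  · exfalso; omega
  · exact h

theorem tM_eigen (h0 : 0 < μ) (hs : ∑ i : Fin (m + 1), μ ^ ((i : ℕ) + 1) = 1) (k : ℕ) :
    (tM ℝ m)^[k] (fun i : Fin (m + 1) => μ ^ ((i : ℕ) + 1)) =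
      fun i : Fin (m + 1) => (μ⁻¹) ^ k * μ ^ ((i : ℕ) + 1) := by
  induction k with
  | zero => simp
  | succ k ih =>
    rw [Function.iterate_succ_apply', ih]
    funext i
    refine Fin.cases ?_ (fun j => ?_) i
    · rw [tM_zero, ← Finset.mul_sum, hs]
      simp only [Fin.val_zero]
      rw [pow_succ, zero_add, pow_one, mul_assoc, inv_mul_cancel₀ h0.ne']
    · rw [tM_succ]
      simp only [Fin.val_succ, Fin.val_castSucc]
      have hinv := inv_mul_cancel₀ h0.ne'
      rw [pow_succ μ⁻¹ k, pow_succ μ ((j : ℕ) + 1)]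
      linear_combination (-(μ⁻¹ ^ k * μ ^ ((j : ℕ) + 1))) * hinv

end mu

/-- No power of the matrix has a proper nontrivial invariant rational subspace. -/
theorem tM_irred {m : ℕ} (hm : 1 ≤ m) (n : ℕ) (hn : 1 ≤ n) (v g : Fin (m + 1) → ℤ)
    (hv : v ≠ 0) (h : ∀ j, ∑ i, g i * (tM ℤ m)^[n * j] v i = 0) : g = 0 := by
  obtain ⟨μ, h0, h1, hs⟩ := exists_mu m hm
  apply dual_zero_int hm h0 hs
  have hl : ell m μ (fun i => (v i : ℝ)) ≠ 0 := fun h => hv (ell_zero_int hm h0 hs v h)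
  set u : Fin (m + 1) → ℝ := fun i => μ ^ ((i : ℕ) + 1) with hu
  have hlu : 0 < ell m μ u := by
    unfold ell
    apply Finset.sum_pos
    · intro i _
      have : μ ^ ((Fin.rev i : ℕ) + 1) < 1 := pow_lt_one₀ h0.le h1 (by omega)
      exact mul_pos (by linarith) (pow_pos h0 _)
    · exact Finset.univ_nonempty
  set c := ell m μ (fun i => (v i : ℝ)) / ell m μ u with hc
  have hc0 : c ≠ 0 := div_ne_zero hl hlu.ne'
  set v' : Fin (m + 1) → ℝ := (fun i => (v i : ℝ)) - c • u with hv'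
  have hlv' : ell m μ v' = 0 := by
    have : ell m μ v' = ell m μ (fun i => (v i : ℝ)) - c * ell m μ u := by
      unfold ell
      rw [Finset.mul_sum, ← Finset.sum_sub_distrib]
      exact Finset.sum_congr rfl (fun i _ => by simp [hv']; ring)
    rw [this, hc, div_mul_cancel₀ _ hlu.ne', sub_self]
  set C : ℝ := ∑ i, |v' i| with hC
  have hb := ell_zero_bound h0 hs v' hlv' C (fun j =>
    Finset.single_le_sum (f := fun i => |v' i|) (fun i _ => abs_nonneg _) (Finset.mem_univ j))
  set G : ℝ := ∑ i, (g i : ℝ) * μ ^ ((i : ℕ) + 1) with hG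
  have key : ∀ j, (μ⁻¹) ^ (n * j) * |c * G| ≤ ∑ i, |(g i : ℝ)| * C := by
    intro j
    have e1 : ∑ i, (g i : ℝ) * (tM ℝ m)^[n * j] (fun i => (v i : ℝ)) i = 0 := by
      have := h j
      have h2 : ((∑ i, g i * (tM ℤ m)^[n * j] v i : ℤ) : ℝ) = 0 := by exact_mod_cast this
      push_cast at h2
      simpa only [tM_cast] using h2
    have e2 : (fun i => (v i : ℝ)) = v' + c • u := by rw [hv']; simp
    rw [e2, iterate_map_add, tM_iter_smul, hu, tM_eigen h0 hs] at e1
    simp only [Pi.add_apply, Pi.smul_apply, smul_eq_mul, mul_add, Finset.sum_add_distrib] at e1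
    have e3 : ∑ i, (g i : ℝ) * (c * (μ⁻¹ ^ (n * j) * μ ^ ((i : ℕ) + 1))) =
        μ⁻¹ ^ (n * j) * (c * G) := by
      rw [hG, Finset.mul_sum, Finset.mul_sum]
      exact Finset.sum_congr rfl (fun i _ => by ring)
    rw [e3] at e1
    have e4 : μ⁻¹ ^ (n * j) * |c * G| = |∑ i, (g i : ℝ) * (tM ℝ m)^[n * j] v' i| := by
      have : 0 < μ⁻¹ ^ (n * j) := pow_pos (inv_pos.2 h0) _
      have e5 : ∑ i, (g i : ℝ) * (tM ℝ m)^[n * j] v' i = -(μ⁻¹ ^ (n * j) * (c * G)) := by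
        linarith
      rw [e5, abs_neg, abs_mul _ (c * G), abs_of_pos this]
    rw [e4]
    refine (Finset.abs_sum_le_sum_abs _ _).trans (Finset.sum_le_sum fun i _ => ?_)
    rw [abs_mul]
    exact mul_le_mul_of_nonneg_left (hb _ i) (abs_nonneg _)
  by_contra hne
  have hpos : 0 < |c * G| := abs_pos.2 (mul_ne_zero hc0 hne)
  have hone : 1 < μ⁻¹ := (one_lt_inv₀ h0).2 h1
  obtain ⟨j, hj⟩ := pow_unbounded_of_one_lt ((∑ i, |(g i : ℝ)| * C) / |c * G|) hone
  rw [div_lt_iff₀ hpos] at hj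
  have h2 : μ⁻¹ ^ j ≤ μ⁻¹ ^ (n * j) := pow_le_pow_right₀ hone.le (by nlinarith)
  have := key j
  have := mul_le_mul_of_nonneg_right h2 hpos.le
  linarith

/-! ### The automorphism -/

/-- The homomorphism `a_i ↦ a_{i+1} a_0`, `a_m ↦ a_0`. -/
def phiHom (m : ℕ) : FreeGroup (Fin (m + 1)) →* FreeGroup (Fin (m + 1)) :=
  FreeGroup.lift (fun i => Fin.lastCases (FreeGroup.of 0)
    (fun k : Fin m => FreeGroup.of k.succ * FreeGroup.of 0) i)

/-- The inverse of `phiHom`. -/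
def phiInv (m : ℕ) : FreeGroup (Fin (m + 1)) →* FreeGroup (Fin (m + 1)) :=
  FreeGroup.lift (fun i => Fin.cases (FreeGroup.of (Fin.last m))
    (fun k : Fin m => FreeGroup.of k.castSucc * (FreeGroup.of (Fin.last m))⁻¹) i)

@[simp] theorem phiHom_last (m : ℕ) :
    phiHom m (FreeGroup.of (Fin.last m)) = FreeGroup.of 0 := by
  simp [phiHom]

@[simp] theorem phiHom_castSucc (m : ℕ) (k : Fin m) :
    phiHom m (FreeGroup.of k.castSucc) = FreeGroup.of k.succ * FreeGroup.of 0 := by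
  simp [phiHom]

@[simp] theorem phiInv_zero (m : ℕ) :
    phiInv m (FreeGroup.of 0) = FreeGroup.of (Fin.last m) := by
  simp [phiInv]

@[simp] theorem phiInv_succ (m : ℕ) (k : Fin m) :
    phiInv m (FreeGroup.of k.succ) =
      FreeGroup.of k.castSucc * (FreeGroup.of (Fin.last m))⁻¹ := by
  simp [phiInv]

/-- The `r`-bonacci automorphism of the free group of rank `r = m + 1`. -/
def phi (m : ℕ) : MulAut (FreeGroup (Fin (m + 1))) :=
  MonoidHom.toMulEquiv (phiHom m) (phiInv m)
    (by
      apply FreeGroup.ext_hom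
      intro i
      refine Fin.lastCases ?_ (fun k => ?_) i
      · simp
      · simp)
    (by
      apply FreeGroup.ext_hom
      intro i
      refine Fin.cases ?_ (fun k => ?_) i
      · simp
      · simp)

theorem phi_apply (m : ℕ) (w : FreeGroup (Fin (m + 1))) : phi m w = phiHom m w := rfl

theorem phi_pow_apply (m n : ℕ) (w : FreeGroup (Fin (m + 1))) :
    (phi m ^ n : MulAut (FreeGroup (Fin (m + 1)))) w = (phiHom m)^[n] w := by
  induction n with
  | zero => rfl
  | succ n ih => rw [pow_succ', MulAut.mul_apply, ih, Function.iterate_succ_apply', phi_apply]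

/-- The abelianization map. -/
def abHom (m : ℕ) : FreeGroup (Fin (m + 1)) →* Multiplicative (Fin (m + 1) → ℤ) :=
  FreeGroup.lift (fun i => Multiplicative.ofAdd (Pi.single i 1))

/-- The vector of exponent sums. -/
def ab {m : ℕ} (w : FreeGroup (Fin (m + 1))) : Fin (m + 1) → ℤ := (abHom m w).toAdd

theorem ab_one {m : ℕ} : ab (1 : FreeGroup (Fin (m + 1))) = 0 := by simp [ab]

theorem ab_mul {m : ℕ} (x y : FreeGroup (Fin (m + 1))) : ab (x * y) = ab x + ab y := by simp [ab]

theorem ab_inv {m : ℕ} (x : FreeGroup (Fin (m + 1))) : ab (x⁻¹) = - ab x := by simp [ab]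

theorem ab_of {m : ℕ} (i : Fin (m + 1)) : ab (FreeGroup.of i) = Pi.single i 1 := by
  simp [ab, abHom]

theorem ab_conj {m : ℕ} {x y : FreeGroup (Fin (m + 1))} (h : IsConj x y) : ab x = ab y := by
  obtain ⟨c, rfl⟩ := isConj_iff.1 h
  simp [ab_mul, ab_inv]

theorem tM_single_last {m : ℕ} :
    tM ℤ m (Pi.single (Fin.last m) 1) = Pi.single 0 1 := by
  funext j
  refine Fin.cases ?_ (fun k => ?_) j
  · simp
  · rw [tM_succ]
    simp [(Fin.castSucc_lt_last k).ne]

theorem tM_single_castSucc {m : ℕ} (k : Fin m) :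
    tM ℤ m (Pi.single k.castSucc 1) = Pi.single k.succ 1 + Pi.single 0 1 := by
  funext j
  refine Fin.cases ?_ (fun l => ?_) j
  · simp [Pi.single_apply, (Fin.succ_ne_zero k).symm]
  · rw [tM_succ]
    simp [Pi.single_apply]

theorem ab_phiHom {m : ℕ} (w : FreeGroup (Fin (m + 1))) :
    ab (phiHom m w) = tM ℤ m (ab w) := by
  induction w using FreeGroup.induction_on with
  | C1 => simp [ab_one]
  | of i =>
    refine Fin.lastCases ?_ (fun k => ?_) i
    · rw [phiHom_last, ab_of, ab_of, tM_single_last]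
    · rw [phiHom_castSucc, ab_mul, ab_of, ab_of, ab_of, tM_single_castSucc]
  | inv_of i h => rw [map_inv, ab_inv, ab_inv, h, map_neg]
  | mul x y hx hy => rw [map_mul, ab_mul, ab_mul, hx, hy, map_add]

theorem ab_iter {m : ℕ} (w : FreeGroup (Fin (m + 1))) (k : ℕ) :
    ab ((phiHom m)^[k] w) = (tM ℤ m)^[k] (ab w) := by
  induction k with
  | zero => rfl
  | succ k ih => rw [Function.iterate_succ_apply', ab_phiHom, ih, Function.iterate_succ_apply']

/-- Homomorphisms to `ℤ` factor through the abelianization. -/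
theorem hom_eq_ab {m : ℕ} (g : FreeGroup (Fin (m + 1)) →* Multiplicative ℤ)
    (w : FreeGroup (Fin (m + 1))) :
    (g w).toAdd = ∑ i, (g (FreeGroup.of i)).toAdd * ab w i := by
  induction w using FreeGroup.induction_on with
  | C1 => simp [ab_one]
  | of i => simp [ab_of, Pi.single_apply]
  | inv_of i h => rw [map_inv, ab_inv, toAdd_inv, h]; simp
  | mul x y hx hy =>
    rw [map_mul, ab_mul, toAdd_mul, hx, hy, ← Finset.sum_add_distrib]
    exact Finset.sum_congr rfl (fun i _ => by rw [Pi.add_apply]; ring)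

/-- A nontrivial subgroup of a free group has a nontrivial homomorphism to `ℤ`. -/
theorem exists_hom_int {X : Type} (B : Subgroup (FreeGroup X)) (hB : B ≠ ⊥) :
    ∃ (f : B →* Multiplicative ℤ) (b : B), f b ≠ 1 := by
  have hne : Nonempty (IsFreeGroup.Generators B) := by
    by_contra hcon
    rw [not_nonempty_iff] at hcon
    apply hB
    have : Subsingleton B :=
      (IsFreeGroup.toFreeGroup B).toEquiv.subsingleton
    exact (Subgroup.eq_bot_iff_forall B).2 (fun x hx => congrArg Subtype.val (Subsingleton.elim (⟨x, hx⟩ : B) 1))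
  obtain ⟨x⟩ := hne
  refine ⟨IsFreeGroup.lift (fun _ => Multiplicative.ofAdd 1), IsFreeGroup.of x, ?_⟩
  rw [IsFreeGroup.lift_of]
  decide

theorem phi_irreducible {m : ℕ} (hm : 1 ≤ m) (n : ℕ) (hn : 1 ≤ n)
    (A : Subgroup (FreeGroup (Fin (m + 1)))) (hA : IsFreeFactor A) (hbot : A ≠ ⊥) (htop : A ≠ ⊤)
    (u : FreeGroup (Fin (m + 1)))
    (h : Subgroup.map (phi m ^ n : MulAut (FreeGroup (Fin (m + 1)))).toMonoidHom A =
      Subgroup.map (MulAut.conj u).toMonoidHom A) : False := by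
  obtain ⟨B, hB⟩ := hA
  have hBbot : B ≠ ⊥ := by
    intro hb
    apply htop
    have hr := Monoid.Coprod.range_lift A.subtype B.subtype
    rw [MonoidHom.range_eq_top.2 hB.2, Subgroup.range_subtype, Subgroup.range_subtype, hb,
      sup_bot_eq] at hr
    exact hr.symm
  set e : Monoid.Coprod A B ≃* FreeGroup (Fin (m + 1)) := MulEquiv.ofBijective _ hB with he
  have heA : ∀ a : A, e.symm (a : FreeGroup (Fin (m + 1))) = Monoid.Coprod.inl a := fun a => by
    rw [MulEquiv.symm_apply_eq]; simp [he]
  have heB : ∀ b : B, e.symm (b : FreeGroup (Fin (m + 1))) = Monoid.Coprod.inr b := fun b => by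
    rw [MulEquiv.symm_apply_eq]; simp [he]
  obtain ⟨f, a, hfa⟩ := exists_hom_int A hbot
  obtain ⟨f', b, hfb⟩ := exists_hom_int B hBbot
  have hav : ab (a : FreeGroup (Fin (m + 1))) ≠ 0 := by
    intro h0
    have h1 := hom_eq_ab ((f.comp Monoid.Coprod.fst).comp e.symm.toMonoidHom) a
    rw [h0] at h1
    simp [heA] at h1
    exact hfa h1
  set g : FreeGroup (Fin (m + 1)) →* Multiplicative ℤ :=
    (f'.comp Monoid.Coprod.snd).comp e.symm.toMonoidHom with hg
  have hgA : ∀ a ∈ A, g a = 1 := fun a ha => by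
    have := heA ⟨a, ha⟩
    simp only at this
    simp [hg, this]
  have hgb : g b ≠ 1 := by simpa [hg, heB] using hfb
  have step : ∀ a ∈ A, ∃ a' ∈ A, ab ((phiHom m)^[n] a) = ab a' := fun a ha => by
    have hmem : (phi m ^ n : MulAut (FreeGroup (Fin (m + 1)))) a ∈
        Subgroup.map (phi m ^ n : MulAut (FreeGroup (Fin (m + 1)))).toMonoidHom A :=
      ⟨a, ha, rfl⟩
    rw [h] at hmem
    obtain ⟨a', ha', e⟩ := hmem
    refine ⟨a', ha', ?_⟩
    rw [phi_pow_apply] at e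
    rw [← e]
    simp [ab_mul, ab_inv]
  have steps : ∀ j, ∃ a' ∈ A, (tM ℤ m)^[n * j] (ab (a : FreeGroup (Fin (m + 1)))) = ab a' := by
    intro j
    induction j with
    | zero => exact ⟨a, a.2, rfl⟩
    | succ j ih =>
      obtain ⟨a1, ha1, e1⟩ := ih
      obtain ⟨a2, ha2, e2⟩ := step a1 ha1
      refine ⟨a2, ha2, ?_⟩
      rw [mul_add, mul_one, add_comm (n * j) n, Function.iterate_add_apply, e1, ← ab_iter, e2]
  have hz := tM_irred hm n hn (ab (a : FreeGroup (Fin (m + 1))))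
    (fun i => (g (FreeGroup.of i)).toAdd) hav (fun j => by
      obtain ⟨a', ha', e1⟩ := steps j
      rw [e1, ← hom_eq_ab, hgA a' ha']; rfl)
  apply hgb
  have h1 := hom_eq_ab g b
  have h2 : ∀ i, (g (FreeGroup.of i)).toAdd = 0 := fun i => congrFun hz i
  simp only [h2] at h1
  simpa using h1

/-! ### Cyclic words -/

section cyclicWords
open List

theorem norm_pow_cyc {X : Type} [DecidableEq X] (W : List (X × Bool))
    (hW : FreeGroup.IsReduced (W ++ W)) (k : ℕ) :
    (FreeGroup.mk W ^ k).norm = k * W.length := by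
  have hc : FreeGroup.IsCyclicallyReduced W := by
    have h := isChain_append.1 hW
    exact ⟨h.1, h.2.2⟩
  rw [FreeGroup.norm, FreeGroup.toWord_pow, FreeGroup.toWord_mk, hc.isReduced.reduce_eq,
    (hc.flatten_replicate k).isReduced.reduce_eq]
  simp

theorem cyc_length_le {X : Type} [DecidableEq X] (W₁ W₂ : List (X × Bool))
    (h₁ : FreeGroup.IsReduced (W₁ ++ W₁)) (h₂ : FreeGroup.IsReduced (W₂ ++ W₂))
    (h : IsConj (FreeGroup.mk W₁) (FreeGroup.mk W₂)) : W₂.length ≤ W₁.length := by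
  obtain ⟨c, hc⟩ := isConj_iff.1 h
  have key : ∀ k : ℕ, k * W₂.length ≤ k * W₁.length + 2 * c.norm := fun k => by
    rw [← norm_pow_cyc W₁ h₁ k, ← norm_pow_cyc W₂ h₂ k, ← hc, conj_pow]
    have e1 := FreeGroup.norm_mul_le (c * FreeGroup.mk W₁ ^ k) c⁻¹
    have e2 := FreeGroup.norm_mul_le c (FreeGroup.mk W₁ ^ k)
    rw [FreeGroup.norm_inv_eq] at e1
    omega
  by_contra hlt
  have h3 := key (2 * c.norm + 1)
  have h4 : (2 * c.norm + 1) * (W₁.length + 1) ≤ (2 * c.norm + 1) * W₂.length :=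
    Nat.mul_le_mul_left _ (by omega)
  rw [mul_add, mul_one] at h4
  omega

theorem cyc_length_eq {X : Type} [DecidableEq X] (W₁ W₂ : List (X × Bool))
    (h₁ : FreeGroup.IsReduced (W₁ ++ W₁)) (h₂ : FreeGroup.IsReduced (W₂ ++ W₂))
    (h : IsConj (FreeGroup.mk W₁) (FreeGroup.mk W₂)) : W₂.length = W₁.length :=
  le_antisymm (cyc_length_le W₁ W₂ h₁ h₂ h) (cyc_length_le W₂ W₁ h₂ h₁ h.symm)

variable {X : Type}

/-- The element of the free group given by a positive word. -/
def Pp (p : List X) : FreeGroup X := (p.map FreeGroup.of).prod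

@[simp] theorem Pp_nil : Pp ([] : List X) = 1 := rfl
@[simp] theorem Pp_cons (a : X) (p : List X) : Pp (a :: p) = FreeGroup.of a * Pp p := by simp [Pp]
@[simp] theorem Pp_append (p q : List X) : Pp (p ++ q) = Pp p * Pp q := by simp [Pp]

/-- The product `∏ pᵢ nᵢ⁻¹`. -/
def PR (l : List (List X × List X)) : FreeGroup X :=
  (l.map (fun x => Pp x.1 * (Pp x.2)⁻¹)).prod

@[simp] theorem PR_nil : PR ([] : List (List X × List X)) = 1 := rfl
@[simp] theorem PR_cons (x : List X × List X) (l : List (List X × List X)) :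
    PR (x :: l) = Pp x.1 * (Pp x.2)⁻¹ * PR l := by simp [PR]
@[simp] theorem PR_append (l l' : List (List X × List X)) : PR (l ++ l') = PR l * PR l' := by
  simp [PR]

/-- Total length. -/
def tot (l : List (List X × List X)) : ℕ := (l.map (fun x => x.1.length + x.2.length)).sum

@[simp] theorem tot_nil : tot ([] : List (List X × List X)) = 0 := rfl
@[simp] theorem tot_cons (x : List X × List X) (l : List (List X × List X)) :
    tot (x :: l) = x.1.length + x.2.length + tot l := by simp [tot]
@[simp] theorem tot_append (l l' : List (List X × List X)) : tot (l ++ l') = tot l + tot l' := by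
  simp [tot]

theorem le_tot {l : List (List X × List X)} {x : List X × List X} (h : x ∈ l) :
    x.1.length ≤ tot l := by
  obtain ⟨l1, l2, rfl⟩ := List.append_of_mem h
  simp; omega

/-- The signed word of one pair. -/
def wd (x : List X × List X) : List (X × Bool) :=
  x.1.map (fun a => (a, true)) ++ x.2.reverse.map (fun a => (a, false))

/-- The signed word. -/
def WW (l : List (List X × List X)) : List (X × Bool) := (l.map wd).flatten

theorem mk_pos (p : List X) : FreeGroup.mk (p.map (fun a => (a, true))) = Pp p := by
  induction p with
  | nil => rfl
  | cons a p ih =>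
    rw [Pp_cons, ← ih, FreeGroup.of, FreeGroup.mul_mk]; rfl

theorem mk_neg (p : List X) :
    FreeGroup.mk (p.reverse.map (fun a => (a, false))) = (Pp p)⁻¹ := by
  rw [← mk_pos, FreeGroup.inv_mk]
  congr 1
  simp [FreeGroup.invRev]

theorem mk_WW (l : List (List X × List X)) : FreeGroup.mk (WW l) = PR l := by
  induction l with
  | nil => rfl
  | cons x l ih =>
    rw [PR_cons, ← ih, ← mk_pos, ← mk_neg, FreeGroup.mul_mk, FreeGroup.mul_mk]
    rfl

theorem length_WW (l : List (List X × List X)) : (WW l).length = tot l := by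
  induction l with
  | nil => rfl
  | cons x l ih =>
    rw [tot_cons, ← ih]
    simp [WW, wd, add_assoc]

/-- Every element is represented by some list of pairs. -/
theorem exists_PR (w : FreeGroup X) : ∃ l : List (List X × List X), w = PR l := by
  induction w using FreeGroup.induction_on with
  | C1 => exact ⟨[], rfl⟩
  | of i => exact ⟨[([i], [])], by simp⟩
  | inv_of i h => exact ⟨[([], [i])], by simp⟩
  | mul x y hx hy =>
    obtain ⟨l, rfl⟩ := hx
    obtain ⟨l', rfl⟩ := hy
    exact ⟨l ++ l', by simp⟩

/-- The list of pairs describes a cyclically reduced word. -/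
def Good (l : List (List X × List X)) : Prop :=
  (∀ x ∈ l, x.1 ≠ [] ∧ x.2 ≠ [] ∧ x.1.getLast? ≠ x.2.getLast?) ∧
    IsChain (fun x y : List X × List X => x.2.head? ≠ y.1.head?) (l ++ l)

theorem Good.isReduced {l : List (List X × List X)} (h : Good l) :
    FreeGroup.IsReduced (WW l ++ WW l) := by
  have e : WW l ++ WW l = ((l ++ l).map wd).flatten := by simp [WW]
  have hm : ∀ x ∈ l ++ l, x.1 ≠ [] ∧ x.2 ≠ [] ∧ x.1.getLast? ≠ x.2.getLast? := fun x hx =>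
    h.1 x (by simpa using hx)
  rw [e, FreeGroup.IsReduced, isChain_flatten]
  · constructor
    · intro w hw
      obtain ⟨x, hx, rfl⟩ := List.mem_map.1 hw
      obtain ⟨h1, h2, h3⟩ := hm x hx
      unfold wd
      rw [isChain_append]
      refine ⟨?_, ?_, ?_⟩
      · rw [isChain_map]
        exact (isChain_isInfix _).imp (fun _ _ _ _ => rfl)
      · rw [isChain_map]
        exact (isChain_isInfix _).imp (fun _ _ _ _ => rfl)
      · intro a ha b hb hab
        exfalso
        simp only [List.getLast?_map, List.head?_map, List.head?_reverse, Option.mem_def,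
          Option.map_eq_some_iff] at ha hb
        obtain ⟨a', ha', rfl⟩ := ha
        obtain ⟨b', hb', rfl⟩ := hb
        simp only at hab
        rw [ha', hb', hab] at h3
        exact h3 rfl
    · rw [isChain_map]
      refine IsChain.imp_of_mem_imp ?_ h.2
      intro x y hx hy hxy a ha b hb hab
      exfalso
      obtain ⟨h1, h2, h3⟩ := hm x hx
      obtain ⟨h1', h2', h3'⟩ := hm y hy
      unfold wd at ha hb
      rw [getLast?_append_of_ne_nil _ (by simpa using h2)] at ha
      rw [head?_append_of_ne_nil _ (by simpa using h1')] at hb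
      simp only [List.getLast?_map, List.head?_map, List.getLast?_reverse, Option.mem_def,
          Option.map_eq_some_iff] at ha hb
      obtain ⟨a', ha', rfl⟩ := ha
      obtain ⟨b', hb', rfl⟩ := hb
      simp only at hab
      rw [ha', hb', hab] at hxy
      exact hxy rfl
  · intro hmem
    obtain ⟨x, hx, he⟩ := List.mem_map.1 hmem
    obtain ⟨h1, h2, h3⟩ := hm x hx
    simp [wd] at he
    exact h1 he.1

theorem isConj_mul_comm (x y : FreeGroup X) : IsConj (x * y) (y * x) :=
  isConj_iff.2 ⟨y, by group⟩

/-- If the number of pairs is minimal then all pieces are nonempty. -/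
theorem pieces_ne_nil (l : List (List X × List X)) (v : FreeGroup X) (hconj : IsConj v (PR l))
    (hpos : ∀ p : List X, IsConj v (Pp p) → False)
    (hneg : ∀ p : List X, IsConj v ((Pp p)⁻¹) → False)
    (hmin : ∀ l', IsConj v (PR l') → l.length ≤ l'.length) :
    ∀ x ∈ l, x.1 ≠ [] ∧ x.2 ≠ [] := by
  rintro ⟨p, n⟩ hx
  obtain ⟨l1, l2, rfl⟩ := List.append_of_mem hx
  constructor
  · rintro hp
    simp only at hp
    subst hp
    rcases List.eq_nil_or_concat' l1 with rfl | ⟨l1, ⟨p', n'⟩, rfl⟩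
    · rcases List.eq_nil_or_concat' l2 with rfl | ⟨l2, ⟨p', n'⟩, rfl⟩
      · exact hneg n (by simpa using hconj)
      · have := hmin (l2 ++ [(p', n ++ n')]) (hconj.trans (by
          have := isConj_mul_comm ((Pp n)⁻¹) (PR l2 * Pp p' * (Pp n')⁻¹)
          simpa [mul_assoc] using this))
        simp at this
    · have := hmin (l1 ++ (p', n ++ n') :: l2) (by simpa [mul_assoc] using hconj)
      simp at this
  · rintro hn
    simp only at hn
    subst hn
    rcases l2 with _ | ⟨⟨p', n'⟩, l2⟩
    · rcases l1 with _ | ⟨⟨p', n'⟩, l1⟩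
      · exact hpos p (by simpa using hconj)
      · have := hmin ((p ++ p', n') :: l1) (hconj.trans (by
          have := isConj_mul_comm (Pp p' * (Pp n')⁻¹ * PR l1) (Pp p)
          simpa [mul_assoc] using this))
        simp at this
    · have := hmin (l1 ++ (p ++ p', n') :: l2) (by simpa [mul_assoc] using hconj)
      simp at this

theorem head?_eq_some_cons {p : List X} {a : X} (h : p.head? = some a) : ∃ q, p = a :: q := by
  cases p with
  | nil => simp at h
  | cons b q => simp at h; exact ⟨q, by rw [h]⟩

theorem getLast?_eq_some_concat {p : List X} {a : X} (h : p.getLast? = some a) :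
    ∃ q, p = q ++ [a] := by
  rcases List.eq_nil_or_concat' p with rfl | ⟨q, b, rfl⟩
  · simp at h
  · simp at h; exact ⟨q, by rw [h]⟩

/-- A representative with the minimal number of pairs and minimal total length is good. -/
theorem good_of_min (l : List (List X × List X)) (v : FreeGroup X) (hconj : IsConj v (PR l))
    (hne : ∀ x ∈ l, x.1 ≠ [] ∧ x.2 ≠ [])
    (hmin : ∀ l', l'.length = l.length → IsConj v (PR l') → tot l ≤ tot l') : Good l := by
  have hhead : ∀ x ∈ l, ∀ y ∈ l, x.2.head? = y.1.head? →
      ∃ a n' p', x.2 = a :: n' ∧ y.1 = a :: p' := by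
    intro x hx y hy h
    obtain ⟨a, n', ha⟩ := List.exists_cons_of_ne_nil (hne x hx).2
    rw [ha] at h
    obtain ⟨p', hp'⟩ := head?_eq_some_cons (a := a) (h.symm.trans (by simp))
    exact ⟨a, n', p', ha, hp'⟩
  refine ⟨?_, ?_⟩
  · rintro ⟨p, n⟩ hx
    refine ⟨(hne _ hx).1, (hne _ hx).2, ?_⟩
    intro h
    simp only at h
    rcases List.eq_nil_or_concat' p with rfl | ⟨p', a, rfl⟩
    · exact (hne _ hx).1 rfl
    · obtain ⟨n', rfl⟩ := getLast?_eq_some_concat (a := a) (h.symm.trans (by simp))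
      obtain ⟨l1, l2, rfl⟩ := List.append_of_mem hx
      have := hmin (l1 ++ (p', n') :: l2) (by simp) (by simpa [mul_assoc] using hconj)
      simp at this
      omega
  · rw [isChain_append]
    have hl : IsChain (fun x y : List X × List X => x.2.head? ≠ y.1.head?) l := by
      refine (isChain_isInfix l).imp ?_
      rintro ⟨p1, n1⟩ ⟨p2, n2⟩ ⟨l1, l2, hl⟩ h
      simp only at h
      obtain ⟨a, n', p', h1, h2⟩ := hhead (p1, n1) (by rw [← hl]; simp) (p2, n2)
        (by rw [← hl]; simp) h
      simp only at h1 h2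
      subst h1 h2 hl
      have := hmin (l1 ++ (p1, n') :: (p', n2) :: l2) (by simp) (by simpa [mul_assoc] using hconj)
      simp at this
      omega
    refine ⟨hl, hl, ?_⟩
    intro x hx y hy h
    obtain ⟨a, n', p', h1, h2⟩ := hhead x (List.mem_of_getLast? hx) y (List.mem_of_head? hy) h
    obtain ⟨l1, rfl⟩ := head?_eq_some_cons hy
    obtain ⟨p1, n1⟩ := x
    obtain ⟨p2, n2⟩ := y
    simp only at h1 h2
    subst h1 h2
    rcases List.eq_nil_or_concat' l1 with rfl | ⟨l1, z, rfl⟩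
    · simp at hx
      obtain ⟨rfl, rfl⟩ := hx
      have := hmin [(p', n')] (by simp) (hconj.trans (by
        have := isConj_mul_comm (FreeGroup.of a) (Pp p' * (Pp n')⁻¹ * (FreeGroup.of a)⁻¹)
        simpa [mul_assoc] using this))
      simp at this
      omega
    · rw [← List.cons_append, List.getLast?_concat, Option.mem_def, Option.some_inj] at hx
      subst hx
      have := hmin ((p', n2) :: l1 ++ [(p1, n')]) (by simp) (hconj.trans (by
        have := isConj_mul_comm (FreeGroup.of a)
          (Pp p' * (Pp n2)⁻¹ * PR l1 * Pp p1 * (Pp n')⁻¹ * (FreeGroup.of a)⁻¹)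
        simpa [mul_assoc] using this))
      simp at this
      omega

end cyclicWords

/-! ### The action on positive words -/

section posWords
open List

variable {m : ℕ}

/-- The image of a letter, without the final letter `0`. -/
def phiD (i : Fin (m + 1)) : List (Fin (m + 1)) :=
  Fin.lastCases [] (fun k : Fin m => [k.succ]) i

@[simp] theorem phiD_last : phiD (Fin.last m) = [] := by simp [phiD]
@[simp] theorem phiD_castSucc (k : Fin m) : phiD k.castSucc = [k.succ] := by simp [phiD]

/-- The automorphism on positive words. -/
def phiL (p : List (Fin (m + 1))) : List (Fin (m + 1)) := p.flatMap (fun i => phiD i ++ [0])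

/-- The automorphism on positive words, with the final letter removed. -/
def psi (p : List (Fin (m + 1))) : List (Fin (m + 1)) := (phiL p).dropLast

/-- The cyclic shift of letters. -/
def sg (i : Fin (m + 1)) : Fin (m + 1) := Fin.lastCases 0 (fun k : Fin m => k.succ) i

@[simp] theorem sg_last : sg (Fin.last m) = 0 := by simp [sg]
@[simp] theorem sg_castSucc (k : Fin m) : sg k.castSucc = k.succ := by simp [sg]

theorem sg_inj : Function.Injective (sg : Fin (m + 1) → Fin (m + 1)) := by
  intro i j
  refine Fin.lastCases ?_ (fun k => ?_) i <;> refine Fin.lastCases ?_ (fun l => ?_) j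
  · simp
  · simp [(Fin.succ_ne_zero l).symm]
  · simp [(Fin.succ_ne_zero k)]
  · simp

@[simp] theorem phiL_nil : phiL ([] : List (Fin (m + 1))) = [] := rfl
theorem phiL_cons (a : Fin (m + 1)) (p : List (Fin (m + 1))) :
    phiL (a :: p) = phiD a ++ 0 :: phiL p := by simp [phiL]
theorem phiL_concat (a : Fin (m + 1)) (p : List (Fin (m + 1))) :
    phiL (p ++ [a]) = phiL p ++ phiD a ++ [0] := by simp [phiL]

theorem psi_concat (a : Fin (m + 1)) (p : List (Fin (m + 1))) :
    psi (p ++ [a]) = phiL p ++ phiD a := by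
  rw [psi, phiL_concat, List.dropLast_concat]

theorem phiL_eq_psi {p : List (Fin (m + 1))} (hp : p ≠ []) : phiL p = psi p ++ [0] := by
  rcases List.eq_nil_or_concat' p with rfl | ⟨p, a, rfl⟩
  · exact absurd rfl hp
  · rw [psi_concat, phiL_concat]

theorem psi_head? {p : List (Fin (m + 1))} (hp : p ≠ []) (h : psi p ≠ []) :
    (psi p).head? = p.head?.map sg := by
  have e : (phiL p).head? = (psi p).head? := by
    rw [phiL_eq_psi hp, head?_append_of_ne_nil _ h]
  rw [← e]
  cases p with
  | nil => exact absurd rfl hp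
  | cons a p =>
    rw [phiL_cons]
    refine Fin.lastCases ?_ (fun k => ?_) a
    · simp
    · simp

theorem psi_getLast? {p : List (Fin (m + 1))} (hp : p ≠ []) (h : psi p ≠ []) :
    (psi p).getLast? = p.getLast?.map sg := by
  rcases List.eq_nil_or_concat' p with rfl | ⟨p, a, rfl⟩
  · exact absurd rfl hp
  · rw [psi_concat] at h ⊢
    revert h
    refine Fin.lastCases ?_ (fun k => ?_) a
    · intro h
      simp only [phiD_last, append_nil] at h ⊢
      have hp' : p ≠ [] := by rintro rfl; exact h rfl
      rw [phiL_eq_psi hp']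
      simp
    · intro _
      simp

theorem phiHom_Pp (p : List (Fin (m + 1))) : phiHom m (Pp p) = Pp (phiL p) := by
  induction p with
  | nil => simp
  | cons a p ih =>
    rw [Pp_cons, map_mul, ih, phiL_cons, Pp_append, Pp_cons]
    refine Fin.lastCases ?_ (fun k => ?_) a
    · simp
    · simp [mul_assoc]

/-- The action on pairs. -/
def Psi (x : List (Fin (m + 1)) × List (Fin (m + 1))) :
    List (Fin (m + 1)) × List (Fin (m + 1)) := (psi x.1, psi x.2)

theorem phiHom_PR (l : List (List (Fin (m + 1)) × List (Fin (m + 1))))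
    (h : ∀ x ∈ l, x.1 ≠ [] ∧ x.2 ≠ []) : phiHom m (PR l) = PR (l.map Psi) := by
  induction l with
  | nil => simp
  | cons x l ih =>
    have hx := h x (by simp)
    rw [PR_cons, map_mul, ih (fun y hy => h y (by simp [hy])), List.map_cons, PR_cons, map_mul,
      map_inv, phiHom_Pp, phiHom_Pp, phiL_eq_psi hx.1, phiL_eq_psi hx.2]
    simp [Psi, mul_assoc]

theorem good_map (l : List (List (Fin (m + 1)) × List (Fin (m + 1)))) (h : Good l)
    (hne : ∀ x ∈ l.map Psi, x.1 ≠ [] ∧ x.2 ≠ []) : Good (l.map Psi) := by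
  have hinj : Function.Injective (Option.map (sg : Fin (m + 1) → Fin (m + 1))) :=
    Option.map_injective sg_inj
  refine ⟨?_, ?_⟩
  · intro y hy
    refine ⟨(hne y hy).1, (hne y hy).2, ?_⟩
    obtain ⟨x, hx, rfl⟩ := List.mem_map.1 hy
    have h1 := h.1 x hx
    intro he
    simp only [Psi] at he
    rw [psi_getLast? h1.1 (hne _ hy).1, psi_getLast? h1.2.1 (hne _ hy).2] at he
    exact h1.2.2 (hinj he)
  · rw [← List.map_append, isChain_map]
    refine IsChain.imp_of_mem_imp ?_ h.2
    intro x y hx hy hxy he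
    have hx' : x ∈ l := by simpa using hx
    have hy' : y ∈ l := by simpa using hy
    simp only [Psi] at he
    rw [psi_head? (h.1 x hx').2.1 (hne _ (List.mem_map_of_mem hx')).2,
      psi_head? (h.1 y hy').1 (hne _ (List.mem_map_of_mem hy')).1] at he
    exact hxy (hinj he)

/-- The vector of letter counts. -/
def vec (p : List (Fin (m + 1))) : Fin (m + 1) → ℤ := ab (Pp p)

theorem vec_cons (a : Fin (m + 1)) (p : List (Fin (m + 1))) :
    vec (a :: p) = Pi.single a 1 + vec p := by
  simp [vec, ab_mul, ab_of]

theorem vec_bound (p : List (Fin (m + 1))) (i : Fin (m + 1)) :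
    0 ≤ vec p i ∧ vec p i ≤ p.length := by
  induction p with
  | nil => simp [vec, ab_one]
  | cons a p ih =>
    rw [vec_cons, Pi.add_apply, Pi.single_apply, List.length_cons]
    split_ifs <;> push_cast <;> omega

theorem eq_nil_of_vec (p : List (Fin (m + 1))) (h : vec p = 0) : p = [] := by
  cases p with
  | nil => rfl
  | cons a p =>
    have h1 := congrFun h a
    rw [vec_cons, Pi.add_apply] at h1
    have := (vec_bound p a).1
    simp at h1
    omega

theorem vec_psi {p : List (Fin (m + 1))} (hp : p ≠ []) :
    vec (psi p) = tM ℤ m (vec p) - Pi.single 0 1 := by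
  rw [vec, vec, ← ab_phiHom, phiHom_Pp, phiL_eq_psi hp, Pp_append, ab_mul]
  simp [ab_of]

/-- The affine coordinate in which `psi` acts linearly. -/
def dv (p : List (Fin (m + 1))) : Fin (m + 1) → ℤ := fun i => m * vec p i - 1

theorem dv_psi {p : List (Fin (m + 1))} (hp : p ≠ []) : dv (psi p) = tM ℤ m (dv p) := by
  funext i
  unfold dv
  rw [vec_psi hp]
  refine Fin.cases ?_ (fun k => ?_) i
  · simp [← Finset.mul_sum]
    ring
  · rw [tM_succ]
    simp

theorem dv_iter {p : List (Fin (m + 1))} (hp : ∀ k, psi^[k] p ≠ []) (k : ℕ) :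
    dv (psi^[k] p) = (tM ℤ m)^[k] (dv p) := by
  induction k with
  | zero => rfl
  | succ k ih =>
    rw [Function.iterate_succ_apply', dv_psi (hp k), ih, Function.iterate_succ_apply']

/-- No positive word has bounded nonempty `psi`-orbit. -/
theorem psi_unbounded (hm : 2 ≤ m) (n : ℕ) (hn : 1 ≤ n) (p : List (Fin (m + 1)))
    (hp : ∀ k, psi^[k] p ≠ []) (C : ℕ) (hC : ∀ k, (psi^[n * k] p).length ≤ C) : False := by
  have h0 := tM_bounded (by omega) (dv p) n hn (m * C + 1) (fun k i => by
    rw [← dv_iter hp]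
    have h1 := vec_bound (psi^[n * k] p) i
    have h2 : ((psi^[n * k] p).length : ℤ) ≤ C := by exact_mod_cast hC k
    unfold dv
    have h3 : (0 : ℤ) ≤ m * vec (psi^[n * k] p) i := mul_nonneg (by positivity) h1.1
    have h4 : (m : ℤ) * vec (psi^[n * k] p) i ≤ m * C :=
      mul_le_mul_of_nonneg_left (h1.2.trans h2) (by positivity)
    rw [abs_le]
    constructor <;> linarith)
  have h1 := congrFun h0 0
  simp only [dv, Pi.zero_apply] at h1
  have h2 : (m : ℤ) ∣ 1 := ⟨vec p 0, by linarith⟩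
  have h3 := Int.le_of_dvd (by norm_num) h2
  omega

theorem phi_atoroidal (hm : 2 ≤ m) (n : ℕ) (hn : 1 ≤ n) (w : FreeGroup (Fin (m + 1)))
    (hw : w ≠ 1) (h : IsConj ((phiHom m)^[n] w) w) : False := by
  classical
  have hφinj : Function.Injective (phiHom m) := (phi m).injective
  have hconjit : ∀ (k : ℕ) {x y : FreeGroup (Fin (m + 1))}, IsConj x y →
      IsConj ((phiHom m)^[k] x) ((phiHom m)^[k] y) := by
    intro k x y hxy
    induction k with
    | zero => exact hxy
    | succ k ih =>
      rw [Function.iterate_succ_apply', Function.iterate_succ_apply']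
      exact (phiHom m).map_isConj ih
  -- minimal number of pairs over the orbit
  have hex : ∃ M : ℕ, ∃ (k : ℕ) (l : List (List (Fin (m + 1)) × List (Fin (m + 1)))),
      l.length = M ∧ IsConj ((phiHom m)^[k] w) (PR l) := by
    obtain ⟨l, hl⟩ := exists_PR w
    exact ⟨l.length, 0, l, rfl, by rw [← hl]; rfl⟩
  obtain ⟨k0, l0, hl0, hc0⟩ := Nat.find_spec hex
  have hmin0 := fun M (hM : M < Nat.find hex) => Nat.find_min hex hM
  generalize Nat.find hex = M0 at hl0 hmin0
  obtain ⟨w0, hw0⟩ : ∃ w0, w0 = (phiHom m)^[k0] w := ⟨_, rfl⟩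
  have hne1 : ∀ k, (phiHom m)^[k] w0 ≠ 1 := by
    intro k hk
    rw [hw0, ← Function.iterate_add_apply] at hk
    apply hw
    apply hφinj.iterate (k + k0)
    rw [hk, iterate_map_one]
  have hmin : ∀ (k : ℕ) l, IsConj ((phiHom m)^[k] w0) (PR l) → M0 ≤ l.length := by
    intro k l hl
    by_contra hlt
    refine hmin0 l.length (by omega) ⟨k + k0, l, rfl, ?_⟩
    rw [Function.iterate_add_apply, ← hw0]; exact hl
  have hper : IsConj ((phiHom m)^[n] w0) w0 := by
    rw [hw0, ← Function.iterate_add_apply, add_comm n k0, Function.iterate_add_apply]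
    exact hconjit k0 h
  have hperk : ∀ k, IsConj ((phiHom m)^[n * k] w0) w0 := by
    intro k
    induction k with
    | zero => exact IsConj.refl _
    | succ k ih =>
      rw [mul_add, mul_one, Function.iterate_add_apply]
      exact (hconjit _ hper).trans ih
  have hab0 : ab w0 = 0 := by
    apply tM_periodic (by omega) (ab w0) n hn
    rw [← ab_iter, ab_conj hper]
  have habk : ∀ k, ab ((phiHom m)^[k] w0) = 0 := by
    intro k
    rw [ab_iter, hab0, iterate_map_zero]
  have hvec : ∀ k p, IsConj ((phiHom m)^[k] w0) (Pp p) → False := by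
    intro k p hp
    have h1 := ab_conj hp
    rw [habk] at h1
    have := eq_nil_of_vec p h1.symm
    subst this
    rw [Pp_nil, isConj_one_left] at hp
    exact hne1 k hp
  have hvec' : ∀ k p, IsConj ((phiHom m)^[k] w0) ((Pp p)⁻¹) → False := by
    intro k p hp
    have h1 := ab_conj hp
    rw [habk, ab_inv, eq_comm, neg_eq_zero] at h1
    have := eq_nil_of_vec p h1
    subst this
    rw [Pp_nil, inv_one, isConj_one_left] at hp
    exact hne1 k hp
  have hnil : ∀ k l, IsConj ((phiHom m)^[k] w0) (PR l) → l.length = M0 →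
      ∀ x ∈ l, x.1 ≠ [] ∧ x.2 ≠ [] := by
    intro k l hl hlen
    exact pieces_ne_nil l _ hl (hvec k) (hvec' k) (fun l' hl' => hlen ▸ hmin k l' hl')
  -- minimal total length
  have hex2 : ∃ t : ℕ, ∃ l : List (List (Fin (m + 1)) × List (Fin (m + 1))),
      l.length = M0 ∧ IsConj w0 (PR l) ∧ tot l = t :=
    ⟨tot l0, l0, hl0, by rw [hw0]; exact hc0, rfl⟩
  obtain ⟨l, hlM, hlc, hlt⟩ := Nat.find_spec hex2
  have hgood : Good l := by
    refine good_of_min l w0 hlc (hnil 0 l hlc hlM) ?_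
    intro l' hl' hc'
    rw [hlt]
    exact Nat.find_min' hex2 ⟨l', hl'.trans hlM, hc', rfl⟩
  have horb : ∀ k, Good (l.map (Psi^[k])) ∧ IsConj ((phiHom m)^[k] w0) (PR (l.map (Psi^[k]))) := by
    intro k
    induction k with
    | zero =>
      rw [show (Psi (m := m))^[0] = id from rfl, List.map_id]
      exact ⟨hgood, hlc⟩
    | succ k ih =>
      have e : l.map (Psi^[k + 1]) = (l.map (Psi^[k])).map Psi := by
        rw [List.map_map, Function.iterate_succ']
      have hc : IsConj ((phiHom m)^[k + 1] w0) (PR (l.map (Psi^[k + 1]))) := by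
        rw [e, ← phiHom_PR _ (fun x hx => ⟨(ih.1.1 x hx).1, (ih.1.1 x hx).2.1⟩),
          Function.iterate_succ_apply']
        exact (phiHom m).map_isConj ih.2
      have hn := hnil _ _ hc (by simpa using hlM)
      refine ⟨?_, hc⟩
      rw [e] at hn ⊢
      exact good_map _ ih.1 hn
  have htot : ∀ k, tot (l.map (Psi^[n * k])) = tot l := by
    intro k
    rw [← length_WW, ← length_WW]
    apply cyc_length_eq _ _ hgood.isReduced (horb (n * k)).1.isReduced
    rw [mk_WW, mk_WW]
    exact (hlc.symm.trans (hperk k).symm).trans (horb (n * k)).2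
  cases l with
  | nil =>
    rw [PR_nil, isConj_one_left] at hlc
    exact hne1 0 hlc
  | cons x l =>
    have hfst : ∀ k, (Psi^[k] x).1 = psi^[k] x.1 := by
      intro k
      induction k with
      | zero => rfl
      | succ k ih =>
        rw [Function.iterate_succ_apply', Function.iterate_succ_apply', ← ih]; rfl
    have hmem : ∀ k, Psi^[k] x ∈ (x :: l).map (Psi^[k]) := fun k => by simp
    refine psi_unbounded hm n hn x.1 (fun k => ?_) (tot (x :: l)) (fun k => ?_)
    · rw [← hfst]
      exact ((horb k).1.1 _ (hmem k)).1
    · rw [← hfst, ← htot k]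
      exact le_tot (hmem _)

end posWords

/-- For every rank `r ≥ 3` there is an automorphism of the free group of rank `r`
that is fully irreducible and atoroidal. -/
theorem exists_fully_irreducible_atoroidal (r : ℕ) (hr : 3 ≤ r) :
    ∃ φ : MulAut (FreeGroup (Fin r)),
      (∀ n : ℕ, 1 ≤ n → ∀ A : Subgroup (FreeGroup (Fin r)), IsFreeFactor A →
        A ≠ ⊥ → A ≠ ⊤ → ∀ u : FreeGroup (Fin r),
          Subgroup.map (φ ^ n : MulAut (FreeGroup (Fin r))).toMonoidHom A ≠
            Subgroup.map (MulAut.conj u).toMonoidHom A) ∧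
      (∀ n : ℕ, 1 ≤ n → ∀ w : FreeGroup (Fin r), w ≠ 1 →
        ¬ IsConj ((φ ^ n : MulAut (FreeGroup (Fin r))) w) w) := by
  obtain ⟨m, rfl⟩ : ∃ m, r = m + 1 := ⟨r - 1, by omega⟩
  refine ⟨phi m, ?_, ?_⟩
  · intro n hn A hA hbot htop u h
    exact phi_irreducible (by omega) n hn A hA hbot htop u h
  · intro n hn w hw h
    rw [phi_pow_apply] at h
    exact phi_atoroidal (by omega) n hn w hw h
end
end

section
/- For the automorphism φ of F₃ determined by a ↦ w_a, b ↦ w_b, c ↦ w_c, and for every integer n ≥ 1 and every element u ∈ F₃ with u ≠ 1, the element φⁿ(u) is not conjugate to u. (The constructed fully irreducible is ageometric, hence nongeometric, hence atoroidal: no positive power preserves a nontrivial conjugacy class.) -/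
noncomputable section

open scoped Pointwise

namespace Atoroidal

/-- Letters: generators and their inverses. -/
abbrev Ltr := Fin 3 × Bool

/-- `okTurn x y`: the two-letter word `x y` is reduced and legal, that is, different from
`a⁻¹ c` and `c⁻¹ a`. -/
def okTurn (x y : Ltr) : Bool :=
  !(decide (y.1 = x.1) && decide (y.2 = !x.2)) &&
  !(decide (x = (0, false)) && decide (y = (2, true))) &&
  !(decide (x = (2, false)) && decide (y = (0, true)))

/-- Legal words. -/
abbrev Legal (w : List Ltr) : Prop := w.IsChain (fun x y => okTurn x y = true)

abbrev lA : Ltr := (0, true)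
abbrev lB : Ltr := (1, true)
abbrev lC : Ltr := (2, true)
abbrev iA : Ltr := (0, false)
abbrev iB : Ltr := (1, false)
abbrev iC : Ltr := (2, false)

/-- The words `w_a`, `w_b`, `w_c` as lists. -/
def pos : Fin 3 → List Ltr
  | 0 => [lA, lB, lA, iB, lA, lA, lC, iB, lA, lB, lA, iB, lA, lA, lC, lB, lA, lB, lA, iB, lA, lA, lC, lA, lB, lA, iB, lA, lA, lC, iB, lA]
  | 1 => [lB, lA, lB, lA, iB, lA, lA, lC, iA, lB, iC, iA, iA, lB, iA, iB, iA, iC, iA, iA, lB, iA, iB, iA, iB, iC, iA, iA, lB, iA, iB, iA, lB]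
  | 2 => [lA, lB, lA, iB, lA, lA, lC]

/-- The image of a letter. -/
def fl (x : Ltr) : List Ltr := if x.2 then pos x.1 else FreeGroup.invRev (pos x.1)

/-- The image of a word (unreduced). -/
def im : List Ltr → List Ltr
  | [] => []
  | x :: w => fl x ++ im w

/-- After stripping the common prefix of `P` and `Q`, either one of them is exhausted or the turn
is legal. -/
def ok : List Ltr → List Ltr → Bool
  | [], _ => true
  | _, [] => true
  | x :: P, y :: Q => bif decide (x = y) then ok P Q else okTurn (x.1, !x.2) y

/-- The set of legal elements. -/
def S : Set F3 := {g | ∃ w, Legal w ∧ FreeGroup.mk w = g}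

theorem okTurn_bar : ∀ x y : Ltr, okTurn x y = okTurn (y.1, !y.2) (x.1, !x.2) := by decide

theorem okTurn_red : ∀ x y : Ltr, okTurn x y = true → x.1 = y.1 → x.2 = y.2 := by decide

theorem ok_symm : ∀ P Q, ok P Q = ok Q P
  | [], [] => rfl
  | [], _ :: _ => rfl
  | _ :: _, [] => rfl
  | x :: P, y :: Q => by
    have h : ∀ x y : Ltr, okTurn (x.1, !x.2) y = okTurn (y.1, !y.2) x := by decide
    simp only [ok, ok_symm P Q, h x y, eq_comm (a := x)]

theorem legal_invRev {w : List Ltr} (h : Legal w) : Legal (FreeGroup.invRev w) := by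
  unfold FreeGroup.invRev
  rw [Legal, List.isChain_reverse, List.isChain_map]
  exact h.imp (fun x y hxy => by rw [okTurn_bar] at hxy; exact hxy)

theorem legal_red {w : List Ltr} (h : Legal w) : FreeGroup.IsReduced w :=
  h.imp (fun x y hxy => okTurn_red x y hxy)

theorem norm_legal {w : List Ltr} (h : Legal w) : (FreeGroup.mk w).norm = w.length := by
  rw [FreeGroup.norm, FreeGroup.toWord_mk, (legal_red h).reduce_eq]

theorem fl_legal : ∀ x, Legal (fl x) := by decide

theorem fl_length : ∀ x, 2 ≤ (fl x).length := by decide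

theorem fl_turn : ∀ x y, okTurn x y = true →
    ∀ p ∈ (fl x).getLast?, ∀ q ∈ (fl y).head?, okTurn p q = true := by decide

theorem im_legal : ∀ {w : List Ltr}, Legal w → Legal (im w)
  | [], _ => List.isChain_nil
  | [x], _ => by simpa [im] using fl_legal x
  | x :: y :: w, h => by
    have h2 := List.isChain_cons_cons.1 h
    rw [im, Legal, List.isChain_append]
    refine ⟨fl_legal x, im_legal h2.2, fun p hp q hq => fl_turn x y h2.1 p hp q ?_⟩
    have hne : fl y ≠ [] := fun h0 => by
      have := fl_length y
      simp [h0] at this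
    rwa [im, List.head?_append_of_ne_nil _ hne] at hq

theorem im_length : ∀ w : List Ltr, 2 * w.length ≤ (im w).length
  | [] => by simp
  | x :: w => by
    have := im_length w
    have := fl_length x
    simp only [im, List.length_cons, List.length_append]
    omega

theorem inv_mk_mul_mem : ∀ P Q : List Ltr, Legal P → Legal Q → ok P Q = true →
    (FreeGroup.mk P)⁻¹ * FreeGroup.mk Q ∈ S
  | [], Q, _, hQ, _ => ⟨Q, hQ, by rw [FreeGroup.inv_mk, FreeGroup.mul_mk]; rfl⟩
  | x :: P, [], hP, _, _ => ⟨_, legal_invRev hP, by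
      rw [FreeGroup.inv_mk, FreeGroup.mul_mk, List.append_nil]⟩
  | x :: P, y :: Q, hP, hQ, h => by
    by_cases hxy : x = y
    · subst hxy
      have h' : ok P Q = true := by simpa [ok] using h
      have := inv_mk_mul_mem P Q hP.tail hQ.tail h'
      have e : ∀ W : List Ltr, FreeGroup.mk (x :: W) = FreeGroup.mk [x] * FreeGroup.mk W :=
        fun W => by rw [FreeGroup.mul_mk]; rfl
      rw [e P, e Q]
      convert this using 1
      group
    · have h' : okTurn (x.1, !x.2) y = true := by simpa [ok, hxy] using h
      refine ⟨FreeGroup.invRev (x :: P) ++ y :: Q, ?_, by rw [FreeGroup.inv_mk, FreeGroup.mul_mk]⟩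
      rw [Legal, List.isChain_append]
      refine ⟨legal_invRev hP, hQ, ?_⟩
      intro p hp q hq
      simp [FreeGroup.invRev] at hp hq
      subst hp hq
      exact h'

theorem ok_ac (P Q : List Ltr) (hP : Legal (lA :: P)) (hQ : Legal (lC :: Q)) :
    ok (im (lA :: P)) (im (lC :: Q)) = true := by
  rcases Q with _ | ⟨y, Q⟩
  · rfl
  obtain ⟨hy, hQ⟩ := List.isChain_cons_cons.1 hQ
  by_cases hy' : y = iB
  swap
  · clear hP hQ
    obtain ⟨i, s⟩ := y
    fin_cases i <;> cases s <;>
      first | rfl | exact absurd hy (by decide) | exact absurd rfl hy'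
  subst hy'
  rcases P with _ | ⟨x, P⟩
  · rfl
  obtain ⟨hx, hP⟩ := List.isChain_cons_cons.1 hP
  by_cases hx' : x = iC
  swap
  · clear hP hQ
    obtain ⟨i, s⟩ := x
    fin_cases i <;> cases s <;>
      first | rfl | exact absurd hx (by decide) | exact absurd rfl hx'
  subst hx'
  rcases P with _ | ⟨x, P⟩
  · rfl
  obtain ⟨hx, hP⟩ := List.isChain_cons_cons.1 hP
  by_cases hx' : x = iB
  swap
  · clear hP hQ
    obtain ⟨i, s⟩ := x
    fin_cases i <;> cases s <;>
      first | rfl | exact absurd hx (by decide) | exact absurd rfl hx'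
  subst hx'
  rcases Q with _ | ⟨y, Q⟩
  · rfl
  obtain ⟨hy, hQ⟩ := List.isChain_cons_cons.1 hQ
  by_cases hy' : y = lC
  swap
  · clear hP hQ
    obtain ⟨i, s⟩ := y
    fin_cases i <;> cases s <;>
      first | rfl | exact absurd hy (by decide) | exact absurd rfl hy'
  subst hy'
  rcases Q with _ | ⟨y, Q⟩
  · rfl
  obtain ⟨hy, hQ⟩ := List.isChain_cons_cons.1 hQ
  clear hP hQ
  obtain ⟨i, s⟩ := y
  fin_cases i <;> cases s <;> first | rfl | exact absurd hy (by decide)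

theorem ok_im (x y : Ltr) (P Q : List Ltr) (hP : Legal (x :: P)) (hQ : Legal (y :: Q))
    (hxy : x ≠ y) : ok (im (x :: P)) (im (y :: Q)) = true := by
  by_cases h1 : x = lA ∧ y = lC
  · obtain ⟨rfl, rfl⟩ := h1
    exact ok_ac P Q hP hQ
  by_cases h2 : x = lC ∧ y = lA
  · obtain ⟨rfl, rfl⟩ := h2
    rw [ok_symm]
    exact ok_ac Q P hQ hP
  clear hP hQ
  obtain ⟨i, s⟩ := x
  obtain ⟨j, t⟩ := y
  fin_cases i <;> fin_cases j <;> cases s <;> cases t <;>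
    first
    | rfl
    | exact absurd rfl hxy
    | exact absurd ⟨rfl, rfl⟩ h1
    | exact absurd ⟨rfl, rfl⟩ h2

section Map

variable (φ : MulAut F3) (ha : φ a = wa) (hb : φ b = wb) (hc : φ c = wc)

theorem map_mk (ha : φ a = wa) (hb : φ b = wb) (hc : φ c = wc) :
    ∀ w : List Ltr, φ (FreeGroup.mk w) = FreeGroup.mk (im w)
  | [] => map_one φ
  | x :: w => by
    have e : FreeGroup.mk (x :: w) = FreeGroup.mk [x] * FreeGroup.mk w := by
      rw [FreeGroup.mul_mk]; rfl
    have hp : ∀ i : Fin 3, φ (FreeGroup.of i) = FreeGroup.mk (pos i) := by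
      intro i
      fin_cases i
      · exact ha
      · exact hb
      · exact hc
    have h1 : φ (FreeGroup.mk [x]) = FreeGroup.mk (fl x) := by
      obtain ⟨i, s⟩ := x
      cases s
      · have : FreeGroup.mk [((i, false) : Ltr)] = (FreeGroup.of i)⁻¹ := rfl
        rw [this, map_inv, hp, FreeGroup.inv_mk]
        rfl
      · exact hp i
    rw [e, map_mul, h1, map_mk ha hb hc w, FreeGroup.mul_mk, im]

theorem one_mem_S : (1 : F3) ∈ S := ⟨[], List.isChain_nil, rfl⟩

theorem map_inv_mul (ha : φ a = wa) (hb : φ b = wb) (hc : φ c = wc) :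
    ∀ P Q : List Ltr, Legal P → Legal Q → φ ((FreeGroup.mk P)⁻¹ * FreeGroup.mk Q) ∈ S
  | [], Q, _, hQ => by
    rw [map_mul, map_inv, map_mk φ ha hb hc, map_mk φ ha hb hc]
    exact inv_mk_mul_mem _ _ List.isChain_nil (im_legal hQ) rfl
  | x :: P, [], hP, _ => by
    rw [map_mul, map_inv, map_mk φ ha hb hc, map_mk φ ha hb hc]
    refine inv_mk_mul_mem _ _ (im_legal hP) List.isChain_nil ?_
    rw [ok_symm]
    rfl
  | x :: P, y :: Q, hP, hQ => by
    by_cases hxy : x = y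
    · subst hxy
      have := map_inv_mul ha hb hc P Q hP.tail hQ.tail
      have e : ∀ W : List Ltr, FreeGroup.mk (x :: W) = FreeGroup.mk [x] * FreeGroup.mk W :=
        fun W => by rw [FreeGroup.mul_mk]; rfl
      rw [e P, e Q]
      convert this using 2
      group
    · rw [map_mul, map_inv, map_mk φ ha hb hc, map_mk φ ha hb hc]
      exact inv_mk_mul_mem _ _ (im_legal hP) (im_legal hQ) (ok_im x y P Q hP hQ hxy)

theorem map_SS (ha : φ a = wa) (hb : φ b = wb) (hc : φ c = wc) : φ '' (S * S) ⊆ S := by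
  rintro _ ⟨_, ⟨_, ⟨P, hP, rfl⟩, _, ⟨Q, hQ, rfl⟩, rfl⟩, rfl⟩
  have := map_inv_mul φ ha hb hc _ Q (legal_invRev hP) hQ
  rwa [← FreeGroup.inv_mk, inv_inv] at this

theorem norm_map (ha : φ a = wa) (hb : φ b = wb) (hc : φ c = wc) {g : F3} (hg : g ∈ S) :
    2 * g.norm ≤ (φ g).norm := by
  obtain ⟨w, hw, rfl⟩ := hg
  rw [map_mk φ ha hb hc, norm_legal hw, norm_legal (im_legal hw)]
  exact im_length w

end Map

theorem exists_mem_pow (g : F3) : ∃ k, g ∈ S ^ k := by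
  induction g using FreeGroup.induction_on with
  | C1 => exact ⟨0, by simp⟩
  | of i => exact ⟨1, by rw [pow_one]; exact ⟨[(i, true)], List.isChain_singleton _, rfl⟩⟩
  | inv_of i _ => exact ⟨1, by rw [pow_one]; exact ⟨[(i, false)], List.isChain_singleton _, rfl⟩⟩
  | mul x y hx hy =>
    obtain ⟨k, hk⟩ := hx
    obtain ⟨l, hl⟩ := hy
    exact ⟨k + l, by rw [pow_add]; exact Set.mul_mem_mul hk hl⟩

theorem pow_mono {k l : ℕ} (h : k ≤ l) : S ^ k ⊆ S ^ l := Set.pow_subset_pow_right one_mem_S h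

/-- The abstract argument, for any automorphism contracting `S * S` into `S` and doubling lengths
on `S`. -/
theorem abstract_step (ψ : MulAut F3) (h1 : ∀ g ∈ S * S, ψ g ∈ S)
    (h2 : ∀ g ∈ S, 2 * g.norm ≤ (ψ g).norm) (u g : F3) (hu : u ≠ 1)
    (hg : ψ u = g * u * g⁻¹) : False := by
  have hhalf : ∀ k, ∀ x ∈ S ^ (2 * k), ψ x ∈ S ^ k := by
    intro k x hx
    have h3 : ψ '' (S * S) ⊆ S := by
      rintro _ ⟨y, hy, rfl⟩
      exact h1 y hy
    have h4 : ψ '' ((S * S) ^ k) ⊆ S ^ k := by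
      rw [Set.image_pow]
      exact Set.pow_subset_pow_left h3
    rw [pow_mul, pow_two] at hx
    exact h4 ⟨x, hx, rfl⟩
  obtain ⟨G1, hG1⟩ := exists_mem_pow g
  obtain ⟨G2, hG2⟩ := exists_mem_pow g⁻¹
  have hpow : ∀ m : ℕ, ψ (u ^ m) = g * u ^ m * g⁻¹ := by
    intro m
    rw [map_pow, hg, conj_pow]
  have hB : ∀ r m : ℕ, u ^ m ∈ S ^ r → u ^ m ∈ S ^ (2 * (G1 + G2) + 2) := by
    intro r
    induction r using Nat.strong_induction_on with
    | _ r ih =>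
      intro m hm
      by_cases hr : r ≤ 2 * (G1 + G2) + 2
      · exact pow_mono hr hm
      · have h5 := hhalf ((r + 1) / 2) (u ^ m) (pow_mono (by omega) hm)
        refine ih (G2 + (r + 1) / 2 + G1) (by omega) m ?_
        have h6 : u ^ m = g⁻¹ * ψ (u ^ m) * g := by rw [hpow]; group
        rw [h6, pow_add, pow_add]
        exact Set.mul_mem_mul (Set.mul_mem_mul hG2 h5) hG1
  have hiter : ∀ k, ∀ x ∈ S ^ (2 ^ k), (ψ ^ k) x ∈ S := by
    intro k
    induction k with
    | zero => intro x hx; simpa using hx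
    | succ k ih =>
      intro x hx
      rw [pow_succ, MulAut.mul_apply]
      refine ih _ (hhalf _ _ ?_)
      rwa [pow_succ, mul_comm] at hx
  set B := 2 * (G1 + G2) + 2
  set v := (ψ ^ B) u with hv
  have hvS : ∀ m : ℕ, v ^ m ∈ S := by
    intro m
    rw [hv, ← map_pow]
    obtain ⟨r, hr⟩ := exists_mem_pow (u ^ m)
    exact hiter B _ (pow_mono Nat.lt_two_pow_self.le (hB r m hr))
  have hψv : ψ v = (ψ ^ B) g * v * ((ψ ^ B) g)⁻¹ := by
    rw [hv, ← MulAut.mul_apply, ← pow_succ', pow_succ, MulAut.mul_apply, hg, map_mul, map_mul,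
      map_inv]
  set h := (ψ ^ B) g
  have hbound : ∀ m : ℕ, (v ^ m).norm ≤ 2 * h.norm := by
    intro m
    have h7 := h2 _ (hvS m)
    rw [map_pow, hψv, conj_pow] at h7
    have h8 := FreeGroup.norm_mul_le (h * v ^ m) h⁻¹
    have h9 := FreeGroup.norm_mul_le h (v ^ m)
    rw [FreeGroup.norm_inv_eq] at h8
    omega
  have hv1 : v ≠ 1 := by
    intro h0
    exact hu ((map_eq_one_iff _ (ψ ^ B).injective).1 h0)
  have hinj : Function.Injective (fun m : ℕ => v ^ m) := 
    injective_pow_iff_not_isOfFinOrder.2 (not_isOfFinOrder_of_isMulTorsionFree hv1)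
  have hfin : (Set.range (fun m : ℕ => (v ^ m).toWord)).Finite := by
    refine (List.finite_length_le Ltr (2 * h.norm)).subset ?_
    rintro _ ⟨m, rfl⟩
    exact hbound m
  exact Set.infinite_range_of_injective (FreeGroup.toWord_injective.comp hinj) hfin

end Atoroidal

/-- The automorphism `φ` of `F₃` with `a ↦ w_a`, `b ↦ w_b`, `c ↦ w_c` is atoroidal:
no positive power of `φ` maps a nontrivial element to a conjugate of itself. -/
theorem atoroidal_rank3 (φ : MulAut F3)
    (ha : φ a = wa) (hb : φ b = wb) (hc : φ c = wc) :
    ∀ n : ℕ, 1 ≤ n → ∀ u : F3, u ≠ 1 → ¬ IsConj ((φ ^ n : MulAut F3) u) u := by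
  intro n hn u hu hconj
  have h1 : ∀ n : ℕ, 1 ≤ n → (∀ g ∈ Atoroidal.S * Atoroidal.S, (φ ^ n) g ∈ Atoroidal.S) ∧
      (∀ g ∈ Atoroidal.S, 2 * g.norm ≤ ((φ ^ n) g).norm) := by
    intro n hn
    induction n, hn using Nat.le_induction with
    | base =>
      rw [pow_one]
      exact ⟨fun g hg => Atoroidal.map_SS φ ha hb hc ⟨g, hg, rfl⟩,
        fun g hg => Atoroidal.norm_map φ ha hb hc hg⟩
    | succ k hk ih =>
      have hS : ∀ g ∈ Atoroidal.S, (φ ^ k) g ∈ Atoroidal.S := fun g hg =>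
        ih.1 g ⟨g, hg, 1, Atoroidal.one_mem_S, mul_one g⟩
      refine ⟨fun g hg => ?_, fun g hg => ?_⟩
      · rw [pow_succ', MulAut.mul_apply]
        exact Atoroidal.map_SS φ ha hb hc
          ⟨_, ⟨_, ih.1 g hg, 1, Atoroidal.one_mem_S, mul_one _⟩, rfl⟩
      · rw [pow_succ', MulAut.mul_apply]
        have h3 := Atoroidal.norm_map φ ha hb hc (hS g hg)
        have h4 := ih.2 g hg
        omega
  obtain ⟨g, hg⟩ := isConj_iff.1 hconj.symm
  exact Atoroidal.abstract_step (φ ^ n) (h1 n hn).1 (h1 n hn).2 u g hu hg.symm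
end
end
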